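/- Suppose 1 < p ≤ 2 and 0 < s < 1, let p' be the conjugate exponent of p, and let g be holomorphic on the unit disc D. Then: (i) if the Volterra operator T_g maps the Besov space B^p into Q_s, then g ∈ Q_{s,log,1/p'}; (ii) if α > 1/2 and g ∈ Q_{s,log,α}, then T_g maps B^p into Q_s. -/

import Mathlib

open MeasureTheory Metric Complex Real Filter Set

noncomputable section

/-- `f` is holomorphic on the open unit disc. -/
def HolOn (f : ℂ → ℂ) : Prop := DifferentiableOn ℂ f (Metric.ball (0:ℂ) 1)

/-- The normalized Lebesgue area measure on `ℂ` (so the unit disc has total mass 1). -/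
def dA : Measure ℂ := (ENNReal.ofReal π)⁻¹ • volume

/-- Bounded holomorphic functions on the unit disc. -/
def Hinf : Set (ℂ → ℂ) :=
  {f | HolOn f ∧ ∃ C : ℝ, ∀ z ∈ Metric.ball (0:ℂ) 1, ‖f z‖ ≤ C}

/-- The Bloch space. -/
def Bloch : Set (ℂ → ℂ) :=
  {f | HolOn f ∧ ∃ C : ℝ, ∀ z ∈ Metric.ball (0:ℂ) 1,
      (1 - ‖z‖ ^ 2) * ‖deriv f z‖ ≤ C}

/-- The little Bloch space: `(1-|z|²)|f'(z)| → 0` as `|z| → 1⁻`. -/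
def littleBloch : Set (ℂ → ℂ) :=
  {f | HolOn f ∧ ∀ ε : ℝ, 0 < ε → ∃ r : ℝ, r < 1 ∧ ∀ z ∈ Metric.ball (0:ℂ) 1,
      r < ‖z‖ → (1 - ‖z‖ ^ 2) * ‖deriv f z‖ < ε}

/-- The `α`-logarithmic Bloch space. -/
def BlochLog (α : ℝ) : Set (ℂ → ℂ) :=
  {f | HolOn f ∧ ∃ C : ℝ, ∀ z ∈ Metric.ball (0:ℂ) 1,
      (1 - ‖z‖ ^ 2) * (Real.log (2 / (1 - ‖z‖ ^ 2))) ^ α *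
        ‖deriv f z‖ ≤ C}

/-- The Besov space `B¹`: holomorphic `f` with `∫_D |f''| dA < ∞`. -/
def Besov1 : Set (ℂ → ℂ) :=
  {f | HolOn f ∧ ∫⁻ z in Metric.ball (0:ℂ) 1,
      ENNReal.ofReal (‖deriv (deriv f) z‖) ∂dA < ⊤}

/-- The Besov space `Bᵖ` (`1 < p < ∞`): `∫_D (1-|z|)^(p-2) |f'(z)|^p dA(z) < ∞`. -/
def Besov (p : ℝ) : Set (ℂ → ℂ) :=
  {f | HolOn f ∧ ∫⁻ z in Metric.ball (0:ℂ) 1,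
      ENNReal.ofReal ((1 - ‖z‖) ^ (p - 2) * ‖deriv f z‖ ^ p) ∂dA < ⊤}

open scoped Classical in
/-- The Besov space `Bᵖ` for all `1 ≤ p < ∞` (with the special definition at `p = 1`). -/
def BesovFull (p : ℝ) : Set (ℂ → ℂ) := if p = 1 then Besov1 else Besov p

/-- The Möbius transformation `φ_a(z) = (a-z)/(1 - conj a · z)`. -/
def phi (a z : ℂ) : ℂ := (a - z) / (1 - (starRingEnd ℂ) a * z)

/-- The space `Q_s`. -/
def Qs (s : ℝ) : Set (ℂ → ℂ) :=
  {f | HolOn f ∧ ⨆ a ∈ Metric.ball (0:ℂ) 1, ∫⁻ z in Metric.ball (0:ℂ) 1,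
      ENNReal.ofReal (‖deriv f z‖ ^ 2 *
        (1 - ‖phi a z‖ ^ 2) ^ s) ∂dA < ⊤}

/-- The space `Q_{s,log,α}`. -/
def QsLog (s α : ℝ) : Set (ℂ → ℂ) :=
  {f | HolOn f ∧ ⨆ a ∈ Metric.ball (0:ℂ) 1,
      (ENNReal.ofReal ((Real.log (2 / (1 - ‖a‖))) ^ (2 * α)) *
        ∫⁻ z in Metric.ball (0:ℂ) 1,
          ENNReal.ofReal (‖deriv f z‖ ^ 2 *
            (1 - ‖phi a z‖ ^ 2) ^ s) ∂dA) < ⊤}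

/-- The Volterra operator `T_g(f)(z) = ∫_0^z g'(ξ) f(ξ) dξ` (along the segment from 0 to z). -/
def Tg (g f : ℂ → ℂ) : ℂ → ℂ :=
  fun z => z * ∫ t in (0:ℝ)..1, deriv g ((t : ℂ) * z) * f ((t : ℂ) * z)

/-- The companion operator `I_g(f)(z) = ∫_0^z g(ξ) f'(ξ) dξ` (along the segment from 0 to z). -/
def Ig (g f : ℂ → ℂ) : ℂ → ℂ :=
  fun z => z * ∫ t in (0:ℝ)..1, g ((t : ℂ) * z) * deriv f ((t : ℂ) * z)

/-- The multiplication operator `M_g(f) = g · f`. -/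
def Mg (g f : ℂ → ℂ) : ℂ → ℂ := fun z => g z * f z

/-- `T` maps `X` into `Y`. -/
def MapsInto (T : (ℂ → ℂ) → (ℂ → ℂ)) (X Y : Set (ℂ → ℂ)) : Prop :=
  ∀ f ∈ X, T f ∈ Y

/-- The Hardy space `H^q`. -/
def Hardy (q : ℝ) : Set (ℂ → ℂ) :=
  {f | HolOn f ∧ ∃ C : ℝ, ∀ r : ℝ, 0 < r → r < 1 →
      (1 / (2 * π)) * ∫ t in (0:ℝ)..(2 * π),
        ‖f ((r : ℂ) * Complex.exp ((t : ℂ) * Complex.I))‖ ^ q ≤ C}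

/-- An inner function: bounded holomorphic with radial boundary values of modulus 1 a.e. -/
def IsInner (g : ℂ → ℂ) : Prop :=
  g ∈ Hinf ∧ ∀ᵐ t : ℝ ∂(volume.restrict (Set.Ioc (0:ℝ) (2 * π))),
    Filter.Tendsto (fun r : ℝ => ‖g ((r : ℂ) * Complex.exp ((t : ℂ) * Complex.I))‖)
      (nhdsWithin 1 (Set.Iio 1)) (nhds 1)

/-- `X` has the f-property (division by inner functions). -/
def FProperty (X : Set (ℂ → ℂ)) : Prop :=
  ∀ h ∈ X, ∀ g : ℂ → ℂ, IsInner g →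
    (fun z => h z / g z) ∈ Hardy 1 → (fun z => h z / g z) ∈ X

/-- The space of multipliers `M(X,Y)`. -/
def Mult (X Y : Set (ℂ → ℂ)) : Set (ℂ → ℂ) :=
  {g | HolOn g ∧ ∀ f ∈ X, (fun z => g z * f z) ∈ Y}

end

/-!
The integral defining `Q_s` for `T_g f` is `∫ |f|² dμ_a`, where `dμ_a = |g'|² (1 - |φ_a|²)^s dA`.
Both implications compare it with `|f(a)|² μ_a(D)`, because the oscillation is controlled:
`∫ |f - f(a)|² dμ_a ≤ C ‖g‖²_{Q_s} ∫ |f'|² dA`. Indeed the reproducing formula and Cauchy-Schwarz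
bound `(1 - |φ_a(z)|²)^s |f(z) - f(a)|²` by the integral defining `Q_s` for `f` at the point `z`
(first for `a = 0`, then by Möbius invariance), and integrating this against `|g'|² dA` allows
Tonelli's theorem to exchange `f` and `g`.

For (ii), `B^p ⊆ B^2` is contained in the Dirichlet space, whose functions satisfy
`|f(a)|² ≤ C log (2 / (1 - |a|))`.

For (i), take `f_a(z) = (log (2 / (1 - |a|)))^(-1/p) log (4 / (1 - conj a z))`. These functions are
bounded in `B^p` and in the Dirichlet space, while `Re f_a(a) ≥ (log (2 / (1 - |a|)))^(1 - 1/p)`. A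
uniform bound for `∫ (Re f_a)² dμ_a` comes from a gliding hump rather than the closed graph
theorem: as `Re f_a ≥ 0`, a sum `∑ 4⁻ᵏ f_{a_k}` along points violating the bound would lie in `B^p`
and dominate each of its terms.
-/

noncomputable section

open scoped ENNReal NNReal ComplexConjugate

/-! ### One-dimensional integrals -/

theorem lintegral_Ioi_rpow_of_lt {a c : ℝ} (ha : a < -1) (hc : 0 < c) :
    ∫⁻ t in Ioi c, ENNReal.ofReal (t ^ a) = ENNReal.ofReal (-c ^ (a + 1) / (a + 1)) := by
  rw [← integral_Ioi_rpow_of_lt ha hc,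
    ofReal_integral_eq_lintegral_ofReal (integrableOn_Ioi_rpow_of_lt ha hc)]
  filter_upwards [self_mem_ae_restrict measurableSet_Ioi] with t ht
  exact Real.rpow_nonneg (hc.trans ht).le a

theorem lintegral_Ioc_rpow {a c : ℝ} (ha : -1 < a) (hc : 0 ≤ c) :
    ∫⁻ t in Ioc 0 c, ENNReal.ofReal (t ^ a) = ENNReal.ofReal (c ^ (a + 1) / (a + 1)) := by
  have hint := intervalIntegral.intervalIntegrable_rpow' (a := 0) (b := c) ha
  rw [intervalIntegrable_iff_integrableOn_Ioc_of_le hc] at hint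
  rw [← ofReal_integral_eq_lintegral_ofReal hint, ← intervalIntegral.integral_of_le hc,
    integral_rpow (Or.inl ha), Real.zero_rpow (by linarith), sub_zero]
  filter_upwards [self_mem_ae_restrict measurableSet_Ioc] with t ht
  exact Real.rpow_nonneg ht.1.le a

theorem lintegral_Ioc_inv {a b : ℝ} (ha : 0 < a) (hab : a ≤ b) :
    ∫⁻ t in Ioc a b, ENNReal.ofReal t⁻¹ = ENNReal.ofReal (Real.log (b / a)) := by
  have hint : IntervalIntegrable (fun t : ℝ => t⁻¹) volume a b :=
    intervalIntegral.intervalIntegrable_inv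
      (fun t ht => by rw [uIcc_of_le hab] at ht; exact (ha.trans_le ht.1).ne') continuousOn_id
  rw [intervalIntegrable_iff_integrableOn_Ioc_of_le hab] at hint
  rw [← ofReal_integral_eq_lintegral_ofReal hint, ← intervalIntegral.integral_of_le hab,
    integral_inv_of_pos ha (ha.trans_le hab)]
  filter_upwards [self_mem_ae_restrict measurableSet_Ioc] with t ht
  exact inv_nonneg.2 (ha.trans ht.1).le

theorem lintegral_comp_abs (f : ℝ → ℝ≥0∞) : ∫⁻ x, f |x| = 2 * ∫⁻ x in Ioi 0, f x := by
  have hpos : ∫⁻ x in Ioi (0 : ℝ), f |x| = ∫⁻ x in Ioi 0, f x :=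
    setLIntegral_congr_fun measurableSet_Ioi fun x hx => by rw [abs_of_pos hx]
  have hneg : ∫⁻ x in Iio (0 : ℝ), f |x| = ∫⁻ x in Ioi 0, f x := by
    rw [← hpos, ← (Measure.measurePreserving_neg volume).setLIntegral_comp_preimage_emb
      (MeasurableEquiv.neg ℝ).measurableEmbedding]
    simp
  rw [← lintegral_add_compl _ measurableSet_Ioi, compl_Ioi, setLIntegral_congr Iio_ae_eq_Iic.symm,
    hpos, hneg, two_mul]

theorem setLIntegral_Ioi_comp_add_left (f : ℝ → ℝ≥0∞) (a c : ℝ) :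
    ∫⁻ x in Ioi c, f (a + x) = ∫⁻ x in Ioi (a + c), f x := by
  simpa using (measurePreserving_add_left volume a).setLIntegral_comp_preimage_emb
    (measurableEmbedding_addLeft a) f (Ioi (a + c))

theorem setLIntegral_Ioo_comp_sub_left (f : ℝ → ℝ≥0∞) (c : ℝ) :
    ∫⁻ x in Ioo 0 c, f (c - x) = ∫⁻ x in Ioo 0 c, f x := by
  simpa using (Measure.measurePreserving_sub_left volume c).setLIntegral_comp_preimage_emb
    (MeasurableEquiv.subLeft c).measurableEmbedding f (Ioo 0 c)

theorem lintegral_mul_sq_le {X : Type*} [MeasurableSpace X] {μ : Measure X} {f g : X → ℝ≥0∞}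
    (hf : AEMeasurable f μ) (hg : AEMeasurable g μ) :
    (∫⁻ x, f x * g x ∂μ) ^ 2 ≤ (∫⁻ x, f x ^ 2 ∂μ) * ∫⁻ x, g x ^ 2 ∂μ := by
  have hHolder := ENNReal.lintegral_mul_le_Lp_mul_Lq μ Real.HolderConjugate.two_two hf hg
  simp only [ENNReal.rpow_two, Pi.mul_apply] at hHolder
  calc (∫⁻ x, f x * g x ∂μ) ^ 2
      ≤ ((∫⁻ x, f x ^ 2 ∂μ) ^ (1 / 2 : ℝ) * (∫⁻ x, g x ^ 2 ∂μ) ^ (1 / 2 : ℝ)) ^ 2 := by gcongr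
    _ = (∫⁻ x, f x ^ 2 ∂μ) * ∫⁻ x, g x ^ 2 ∂μ := by
      rw [mul_pow, ← ENNReal.rpow_two, ← ENNReal.rpow_two, ← ENNReal.rpow_mul, ← ENNReal.rpow_mul]
      norm_num

/-! ### Polar coordinates and circle means of the kernel -/

instance : SFinite dA := by unfold dA; infer_instance

theorem setLIntegral_dA (S : Set ℂ) (f : ℂ → ℝ≥0∞) :
    ∫⁻ z in S, f z ∂dA = (ENNReal.ofReal π)⁻¹ * ∫⁻ z in S, f z := by
  rw [dA, Measure.restrict_smul, lintegral_smul_measure, smul_eq_mul]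

theorem setLIntegral_ball_eq_polar {f : ℂ → ℝ≥0∞} (hf : Measurable f) (R : ℝ) :
    ∫⁻ z in ball 0 R, f z =
      ∫⁻ ρ in Ioo 0 R, ENNReal.ofReal ρ * ∫⁻ θ in Ioo (-π) π, f (circleMap 0 ρ θ) := by
  have hcircle (p : ℝ × ℝ) : Complex.polarCoord.symm p = circleMap 0 p.1 p.2 := by
    simp [circleMap, Complex.exp_mul_I]
  have : Measurable fun p : ℝ × ℝ => f (circleMap 0 p.1 p.2) :=
    hf.comp (by unfold circleMap; fun_prop)
  have htarget : _root_.polarCoord.target = Ioi 0 ×ˢ Ioo (-π) π := rfl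
  have hind (p : ℝ × ℝ) (hp : p ∈ _root_.polarCoord.target) :
      ENNReal.ofReal p.1 • (ball 0 R).indicator f (Complex.polarCoord.symm p) =
        (Iio R ×ˢ univ).indicator (fun p => ENNReal.ofReal p.1 * f (circleMap 0 p.1 p.2)) p := by
    have hp0 : 0 < p.1 := hp.1
    by_cases hpR : p.1 < R <;> simp [hcircle, abs_of_pos hp0, hpR]
  have hset : Iio R ×ˢ univ ∩ Ioi 0 ×ˢ Ioo (-π) π = Ioo 0 R ×ˢ Ioo (-π) π := by
    rw [prod_inter_prod, univ_inter, Iio_inter_Ioi]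
  rw [← lintegral_indicator measurableSet_ball, ← Complex.lintegral_comp_polarCoord_symm,
    setLIntegral_congr_fun _root_.polarCoord.open_target.measurableSet hind,
    setLIntegral_indicator (measurableSet_Iio.prod MeasurableSet.univ), htarget, hset,
    Measure.volume_eq_prod, ← Measure.prod_restrict, lintegral_prod _ (by fun_prop)]
  exact lintegral_congr fun ρ => lintegral_const_mul' _ _ ENNReal.ofReal_ne_top

theorem setLIntegral_dA_ball_eq_polar {f : ℂ → ℝ≥0∞} (hf : Measurable f) (R : ℝ) :
    ∫⁻ z in ball 0 R, f z ∂dA = ∫⁻ ρ in Ioo 0 R, ENNReal.ofReal (2 * ρ) *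
      (ENNReal.ofReal (2 * π)⁻¹ * ∫⁻ θ in Ioo (-π) π, f (circleMap 0 ρ θ)) := by
  rw [setLIntegral_dA, setLIntegral_ball_eq_polar hf,
    ← lintegral_const_mul' _ _ (ENNReal.inv_ne_top.2 (by simpa using pi_pos))]
  refine setLIntegral_congr_fun measurableSet_Ioo fun ρ hρ => ?_
  have hρ₀ : 0 < ρ := hρ.1
  rw [← mul_assoc, ← mul_assoc, ← ENNReal.ofReal_inv_of_pos pi_pos,
    ← ENNReal.ofReal_mul (by positivity), ← ENNReal.ofReal_mul (by positivity)]
  congr 2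
  field_simp

theorem one_sub_add_abs_le_norm_one_sub_circleMap {r θ : ℝ} (hr₀ : 0 ≤ r) (hr₁ : r ≤ 1)
    (hθ : |θ| ≤ π) : 1 - r + |θ| ≤ 5 * ‖1 - circleMap 0 r θ‖ := by
  have hradius : 1 - r ≤ ‖1 - circleMap 0 r θ‖ := by
    simpa [abs_of_nonneg hr₀] using norm_sub_norm_le (1 : ℂ) (circleMap 0 r θ)
  have hchord : ‖1 - circleMap 0 1 θ‖ ≤ ‖1 - circleMap 0 r θ‖ + (1 - r) := by
    have hdiff : ‖circleMap 0 r θ - circleMap 0 1 θ‖ = 1 - r := by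
      have hfactor : circleMap 0 r θ - circleMap 0 1 θ = ((r - 1 : ℝ) : ℂ) * circleMap 0 1 θ := by
        simp only [circleMap, zero_add, Complex.ofReal_one, one_mul, Complex.ofReal_sub]
        ring
      rw [hfactor, norm_mul, Complex.norm_real, norm_circleMap_zero,
        Real.norm_of_nonpos (by linarith)]
      simp
    exact (norm_sub_le_norm_sub_add_norm_sub _ (circleMap 0 r θ) _).trans_eq (by rw [hdiff])
  have hangle : 2 / π * |θ| ≤ ‖1 - circleMap 0 1 θ‖ := by
    have hsin := Real.mul_abs_le_abs_sin (x := θ / 2) (by rw [abs_div, abs_two]; linarith)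
    rw [abs_div, abs_two] at hsin
    rw [norm_sub_rev, show circleMap 0 1 θ = Complex.exp (I * θ) by simp [circleMap, mul_comm],
      Complex.norm_exp_I_mul_ofReal_sub_one, norm_mul, Real.norm_ofNat, Real.norm_eq_abs]
    linarith
  have hθle : |θ| ≤ π * ‖1 - circleMap 0 r θ‖ := by
    have := pi_pos
    field_simp at hangle
    nlinarith
  nlinarith [Real.pi_lt_four, norm_nonneg (1 - circleMap 0 r θ)]

theorem lintegral_norm_one_sub_circleMap_rpow_le {q r : ℝ} (hq : 1 < q) (hr₀ : 0 ≤ r)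
    (hr₁ : r < 1) :
    ∫⁻ θ in Ioo (-π) π, ENNReal.ofReal (‖1 - circleMap 0 r θ‖ ^ (-q)) ≤
      ENNReal.ofReal (2 * 5 ^ q / (q - 1)) * ENNReal.ofReal ((1 - r) ^ (1 - q)) := by
  have hr : 0 < 1 - r := sub_pos.2 hr₁
  have hq' : 0 < q - 1 := sub_pos.2 hq
  have hpointwise (θ : ℝ) (hθ : θ ∈ Ioo (-π) π) :
      ENNReal.ofReal (‖1 - circleMap 0 r θ‖ ^ (-q)) ≤
        ENNReal.ofReal (5 ^ q) * ENNReal.ofReal ((1 - r + |θ|) ^ (-q)) := by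
    have hlower : (1 - r + |θ|) / 5 ≤ ‖1 - circleMap 0 r θ‖ := by
      linarith [one_sub_add_abs_le_norm_one_sub_circleMap hr₀ hr₁.le (abs_lt.2 hθ).le]
    rw [← ENNReal.ofReal_mul (by positivity)]
    refine ENNReal.ofReal_le_ofReal ?_
    calc ‖1 - circleMap 0 r θ‖ ^ (-q) ≤ ((1 - r + |θ|) / 5) ^ (-q) :=
          Real.rpow_le_rpow_of_nonpos (by positivity) hlower (by linarith)
      _ = 5 ^ q * (1 - r + |θ|) ^ (-q) := by
          rw [Real.div_rpow (by positivity) (by norm_num), Real.rpow_neg (by norm_num : (0:ℝ) ≤ 5)]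
          field_simp
  calc ∫⁻ θ in Ioo (-π) π, ENNReal.ofReal (‖1 - circleMap 0 r θ‖ ^ (-q))
      ≤ ∫⁻ θ, ENNReal.ofReal (5 ^ q) * ENNReal.ofReal ((1 - r + |θ|) ^ (-q)) :=
        (setLIntegral_mono' measurableSet_Ioo hpointwise).trans (setLIntegral_le_lintegral _ _)
    _ = ENNReal.ofReal (5 ^ q) * (2 * ∫⁻ t in Ioi (1 - r), ENNReal.ofReal (t ^ (-q))) := by
        rw [lintegral_const_mul _ (by fun_prop),
          lintegral_comp_abs fun t => ENNReal.ofReal ((1 - r + t) ^ (-q)),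
          setLIntegral_Ioi_comp_add_left fun t => ENNReal.ofReal (t ^ (-q)), add_zero]
    _ = ENNReal.ofReal (2 * 5 ^ q / (q - 1)) * ENNReal.ofReal ((1 - r) ^ (1 - q)) := by
        rw [lintegral_Ioi_rpow_of_lt (by linarith) hr, ← ENNReal.ofReal_ofNat 2,
          ← ENNReal.ofReal_mul (by norm_num), ← ENNReal.ofReal_mul (by positivity),
          ← ENNReal.ofReal_mul (by positivity), show -q + 1 = -(q - 1) by ring,
          show 1 - q = -(q - 1) by ring]
        congr 1
        field_simp

/-! ### Area integrals of the kernel -/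

theorem norm_one_sub_conj_mul_comm (a b : ℂ) : ‖1 - conj a * b‖ = ‖1 - conj b * a‖ := by
  rw [← Complex.norm_conj]
  simp [mul_comm]

theorem one_sub_conj_mul_ne_zero {a z : ℂ} (ha : a ∈ ball (0 : ℂ) 1) (hz : z ∈ ball (0 : ℂ) 1) :
    1 - conj a * z ≠ 0 := by
  rw [mem_ball_zero_iff] at ha hz
  refine sub_ne_zero.2 fun h => ?_
  have hnorm : ‖conj a * z‖ = 1 := by rw [← h, norm_one]
  rw [norm_mul, Complex.norm_conj] at hnorm
  nlinarith [norm_nonneg a, norm_nonneg z]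

theorem norm_one_sub_conj_mul_le_two {a z : ℂ} (ha : a ∈ ball (0 : ℂ) 1)
    (hz : z ∈ ball (0 : ℂ) 1) : ‖1 - conj a * z‖ ≤ 2 := by
  rw [mem_ball_zero_iff] at ha hz
  calc ‖1 - conj a * z‖ ≤ ‖(1 : ℂ)‖ + ‖conj a * z‖ := norm_sub_le _ _
    _ ≤ 1 + 1 := by
        rw [norm_one, norm_mul, Complex.norm_conj]
        gcongr
        exact mul_le_one₀ ha.le (norm_nonneg z) hz.le
    _ = 2 := by norm_num

theorem lintegral_radial_mul_kernel_eq {w : ℂ} {q : ℝ} {W : ℝ → ℝ≥0∞} :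
    ∫⁻ u in ball (0 : ℂ) 1, W ‖u‖ * ENNReal.ofReal (‖1 - conj w * u‖ ^ (-q)) =
      ∫⁻ u in ball (0 : ℂ) 1, W ‖u‖ * ENNReal.ofReal (‖1 - ‖w‖ * u‖ ^ (-q)) := by
  obtain ⟨c, hc⟩ : ∃ c : Circle, (‖w‖ : ℂ) * c = w :=
    ⟨Circle.exp (arg w), by rw [Circle.coe_exp, Complex.norm_mul_exp_arg_mul_I]⟩
  have hrot (u : ℂ) : conj w * rotation c u = ‖w‖ * u := by
    have hunit : conj (c : ℂ) * c = 1 := by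
      rw [Complex.conj_mul', Circle.norm_coe, Complex.ofReal_one, one_pow]
    rw [rotation_apply, ← congrArg conj hc, map_mul, Complex.conj_ofReal]
    linear_combination (‖w‖ : ℂ) * u * hunit
  have hball : rotation c ⁻¹' ball 0 1 = ball 0 1 := by
    rw [LinearIsometryEquiv.preimage_ball, map_zero]
  rw [← (rotation c).measurePreserving.setLIntegral_comp_preimage_emb
    (rotation c).toHomeomorph.measurableEmbedding, hball]
  simp only [LinearIsometryEquiv.norm_map, hrot]

theorem exists_lintegral_radial_mul_kernel_le {q : ℝ} (hq : 1 < q) :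
    ∃ C : ℝ≥0, ∀ w ∈ ball (0 : ℂ) 1, ∀ W : ℝ → ℝ≥0∞, Measurable W →
      ∫⁻ u in ball (0 : ℂ) 1, W ‖u‖ * ENNReal.ofReal (‖1 - conj w * u‖ ^ (-q)) ∂dA ≤
        C * ∫⁻ ρ in Ioo (0 : ℝ) 1, W ρ * ENNReal.ofReal ((1 - ‖w‖ * ρ) ^ (1 - q)) := by
  refine ⟨2 * (Real.toNNReal (2 * π)⁻¹ * Real.toNNReal (2 * 5 ^ q / (q - 1))), fun w hw W hW => ?_⟩
  rw [mem_ball_zero_iff] at hw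
  have hcircle (ρ : ℝ) (hρ : ρ ∈ Ioo (0 : ℝ) 1) :
      ENNReal.ofReal (2 * ρ) * (ENNReal.ofReal (2 * π)⁻¹ * ∫⁻ θ in Ioo (-π) π,
          W ‖circleMap 0 ρ θ‖ * ENNReal.ofReal (‖1 - ‖w‖ * circleMap 0 ρ θ‖ ^ (-q))) ≤
        2 * (ENNReal.ofReal (2 * π)⁻¹ * ENNReal.ofReal (2 * 5 ^ q / (q - 1))) *
          (W ρ * ENNReal.ofReal ((1 - ‖w‖ * ρ) ^ (1 - q))) := by
    have hmul (θ : ℝ) : ‖w‖ * circleMap 0 ρ θ = circleMap 0 (‖w‖ * ρ) θ := by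
      simp [circleMap, mul_assoc]
    simp_rw [hmul, norm_circleMap_zero, abs_of_pos hρ.1]
    rw [lintegral_const_mul _ (by unfold circleMap; fun_prop)]
    calc _ ≤ 2 * (ENNReal.ofReal (2 * π)⁻¹ * (W ρ * (ENNReal.ofReal (2 * 5 ^ q / (q - 1)) *
          ENNReal.ofReal ((1 - ‖w‖ * ρ) ^ (1 - q))))) := by
          gcongr
          · exact ENNReal.ofReal_le_of_le_toReal (by rw [ENNReal.toReal_ofNat]; linarith [hρ.2])
          · exact lintegral_norm_one_sub_circleMap_rpow_le hq
              (mul_nonneg (norm_nonneg w) hρ.1.le) (by nlinarith [hρ.1, hρ.2, norm_nonneg w])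
      _ = _ := by ring
  calc _ = ∫⁻ u in ball (0 : ℂ) 1, W ‖u‖ * ENNReal.ofReal (‖1 - ‖w‖ * u‖ ^ (-q)) ∂dA := by
        rw [setLIntegral_dA, lintegral_radial_mul_kernel_eq, ← setLIntegral_dA]
    _ ≤ _ := by
        rw [setLIntegral_dA_ball_eq_polar (by fun_prop)]
        exact (setLIntegral_mono' measurableSet_Ioo hcircle).trans_eq
          (lintegral_const_mul _ (by fun_prop))

theorem exists_lintegral_kernel_le {t q : ℝ} (ht : -1 < t) (hq : q < 2 + t) :
    ∃ C : ℝ≥0, ∀ w ∈ ball (0 : ℂ) 1,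
      ∫⁻ u in ball (0 : ℂ) 1,
        ENNReal.ofReal ((1 - ‖u‖) ^ t * ‖1 - conj w * u‖ ^ (-q)) ∂dA ≤ C := by
  -- The circle estimate needs an exponent above `1`; raising `q` to `r` only costs `2 ^ (r - q)`.
  obtain ⟨r, hmax, hr⟩ := exists_between (max_lt hq (by linarith : 1 < 2 + t))
  obtain ⟨hqr, hr₁⟩ := max_lt_iff.1 hmax
  obtain ⟨C, hC⟩ := exists_lintegral_radial_mul_kernel_le hr₁
  let W (ρ : ℝ) : ℝ≥0∞ := ENNReal.ofReal (2 ^ (r - q) * (1 - ρ) ^ t)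
  have hkernel (w : ℂ) (hw : w ∈ ball (0 : ℂ) 1) (u : ℂ) (hu : u ∈ ball (0 : ℂ) 1) :
      ENNReal.ofReal ((1 - ‖u‖) ^ t * ‖1 - conj w * u‖ ^ (-q)) ≤
        W ‖u‖ * ENNReal.ofReal (‖1 - conj w * u‖ ^ (-r)) := by
    have hu' : 0 < 1 - ‖u‖ := sub_pos.2 (mem_ball_zero_iff.1 hu)
    have hpos := norm_pos_iff.2 (one_sub_conj_mul_ne_zero hw hu)
    rw [← ENNReal.ofReal_mul (by positivity), mul_comm (2 ^ (r - q)), mul_assoc,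
      show -q = (r - q) + -r by ring, Real.rpow_add hpos]
    gcongr
    exact norm_one_sub_conj_mul_le_two hw hu
  have hradial (w : ℂ) (hw : w ∈ ball (0 : ℂ) 1) (ρ : ℝ) (hρ : ρ ∈ Ioo (0 : ℝ) 1) :
      W ρ * ENNReal.ofReal ((1 - ‖w‖ * ρ) ^ (1 - r)) ≤
        ENNReal.ofReal (2 ^ (r - q)) * ENNReal.ofReal ((1 - ρ) ^ (t + 1 - r)) := by
    have hρ' : 0 < 1 - ρ := sub_pos.2 hρ.2
    have hmono : (1 - ‖w‖ * ρ) ^ (1 - r) ≤ (1 - ρ) ^ (1 - r) :=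
      Real.rpow_le_rpow_of_nonpos hρ' (by nlinarith [hρ.1, mem_ball_zero_iff.1 hw]) (by linarith)
    rw [← ENNReal.ofReal_mul (by positivity), ← ENNReal.ofReal_mul (by positivity), mul_assoc,
      add_sub_assoc, Real.rpow_add hρ']
    gcongr
  refine ⟨C * (Real.toNNReal (2 ^ (r - q)) * Real.toNNReal (1 / (t + 1 - r + 1))), fun w hw => ?_⟩
  calc _ ≤ C * ∫⁻ ρ in Ioo (0 : ℝ) 1, W ρ * ENNReal.ofReal ((1 - ‖w‖ * ρ) ^ (1 - r)) :=
        (setLIntegral_mono' measurableSet_ball (hkernel w hw)).trans (hC w hw W (by fun_prop))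
    _ ≤ C * ∫⁻ ρ in Ioo (0 : ℝ) 1,
          ENNReal.ofReal (2 ^ (r - q)) * ENNReal.ofReal ((1 - ρ) ^ (t + 1 - r)) := by
        exact mul_le_mul' le_rfl (setLIntegral_mono' measurableSet_Ioo (hradial w hw))
    _ = _ := by
        rw [lintegral_const_mul _ (by fun_prop),
          setLIntegral_Ioo_comp_sub_left fun x => ENNReal.ofReal (x ^ (t + 1 - r)),
          setLIntegral_congr Ioo_ae_eq_Ioc, lintegral_Ioc_rpow (by linarith) zero_le_one,
          Real.one_rpow]
        push_cast
        rfl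

/-- The weight `log (2 / (1 - |a|))` whose power `2α` enters the definition of `Q_{s,log,α}`. -/
def logWeight (a : ℂ) : ℝ := Real.log (2 / (1 - ‖a‖))

theorem log_two_le_logWeight {a : ℂ} (ha : a ∈ ball (0 : ℂ) 1) : Real.log 2 ≤ logWeight a := by
  rw [mem_ball_zero_iff] at ha
  refine Real.log_le_log two_pos ?_
  rw [le_div_iff₀ (by linarith)]
  linarith [norm_nonneg a]

theorem logWeight_pos {a : ℂ} (ha : a ∈ ball (0 : ℂ) 1) : 0 < logWeight a :=
  (Real.log_pos one_lt_two).trans_le (log_two_le_logWeight ha)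

theorem lintegral_Ioo_rpow_mul_max_rpow_le {p δ : ℝ} (hp : 1 < p) (hδ₀ : 0 < δ) (hδ₁ : δ ≤ 1) :
    ∫⁻ x in Ioo 0 1, ENNReal.ofReal (x ^ (p - 2) * max δ x ^ (1 - p)) ≤
      ENNReal.ofReal (1 / (p - 1) + Real.log (1 / δ)) := by
  have : 0 < p - 1 := sub_pos.2 hp
  have hnear : ∫⁻ x in Ioc 0 δ, ENNReal.ofReal (x ^ (p - 2) * max δ x ^ (1 - p)) =
      ENNReal.ofReal (1 / (p - 1)) := by
    have hcancel : δ ^ (1 - p) * (δ ^ (p - 2 + 1) / (p - 2 + 1)) = 1 / (p - 1) := by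
      rw [← mul_div_assoc, ← Real.rpow_add hδ₀]
      ring_nf
      simp
    calc _ = ∫⁻ x in Ioc 0 δ, ENNReal.ofReal (δ ^ (1 - p)) * ENNReal.ofReal (x ^ (p - 2)) :=
          setLIntegral_congr_fun measurableSet_Ioc fun x hx => by
            rw [max_eq_left hx.2, mul_comm, ENNReal.ofReal_mul (by positivity)]
      _ = ENNReal.ofReal (1 / (p - 1)) := by
          rw [lintegral_const_mul _ (by fun_prop), lintegral_Ioc_rpow (by linarith) hδ₀.le,
            ← ENNReal.ofReal_mul (by positivity), hcancel]
  have hfar : ∫⁻ x in Ioc δ 1, ENNReal.ofReal (x ^ (p - 2) * max δ x ^ (1 - p)) =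
      ENNReal.ofReal (Real.log (1 / δ)) := by
    rw [← lintegral_Ioc_inv hδ₀ hδ₁]
    refine setLIntegral_congr_fun measurableSet_Ioc fun x hx => ?_
    rw [max_eq_right hx.1.le, ← Real.rpow_add (hδ₀.trans hx.1), ← Real.rpow_neg_one]
    ring_nf
  rw [ENNReal.ofReal_add (by positivity) (Real.log_nonneg (by rwa [le_div_iff₀ hδ₀, one_mul])),
    ← hnear, ← hfar]
  refine (lintegral_mono_set ?_).trans (lintegral_union_le _ _ _)
  rw [Ioc_union_Ioc_eq_Ioc hδ₀.le hδ₁]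
  exact Ioo_subset_Ioc_self

theorem one_div_add_log_le_mul_logWeight {p : ℝ} (hp : 1 < p) {w : ℂ}
    (hw : w ∈ ball (0 : ℂ) 1) :
    1 / (p - 1) + Real.log (1 / (1 - ‖w‖)) ≤ (1 / ((p - 1) * Real.log 2) + 1) * logWeight w := by
  have hp' : 0 < p - 1 := sub_pos.2 hp
  have hw' : 0 < 1 - ‖w‖ := sub_pos.2 (mem_ball_zero_iff.1 hw)
  have : 0 < Real.log 2 := Real.log_pos one_lt_two
  have hlog : Real.log (1 / (1 - ‖w‖)) ≤ logWeight w := by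
    refine Real.log_le_log (by positivity) ?_
    gcongr
    norm_num
  have hconst : 1 / (p - 1) ≤ 1 / ((p - 1) * Real.log 2) * logWeight w := by
    rw [div_mul_eq_mul_div, one_mul, div_le_div_iff₀ hp' (by positivity)]
    nlinarith [log_two_le_logWeight hw]
  linarith

theorem exists_lintegral_kernel_le_logWeight {p : ℝ} (hp : 1 < p) :
    ∃ C : ℝ≥0, ∀ w ∈ ball (0 : ℂ) 1,
      ∫⁻ u in ball (0 : ℂ) 1,
        ENNReal.ofReal ((1 - ‖u‖) ^ (p - 2) * ‖1 - conj w * u‖ ^ (-p)) ∂dA ≤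
          C * ENNReal.ofReal (logWeight w) := by
  obtain ⟨C, hC⟩ := exists_lintegral_radial_mul_kernel_le hp
  refine ⟨C * Real.toNNReal (1 / ((p - 1) * Real.log 2) + 1), fun w hw => ?_⟩
  have hw' : 0 < 1 - ‖w‖ := sub_pos.2 (mem_ball_zero_iff.1 hw)
  have hmax (ρ : ℝ) (hρ : ρ ∈ Ioo (0 : ℝ) 1) :
      ENNReal.ofReal ((1 - ρ) ^ (p - 2)) * ENNReal.ofReal ((1 - ‖w‖ * ρ) ^ (1 - p)) ≤
        ENNReal.ofReal ((1 - ρ) ^ (p - 2) * max (1 - ‖w‖) (1 - ρ) ^ (1 - p)) := by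
    have hρ' : 0 < 1 - ρ := sub_pos.2 hρ.2
    have hle : max (1 - ‖w‖) (1 - ρ) ≤ 1 - ‖w‖ * ρ :=
      max_le (by nlinarith [hρ.2, norm_nonneg w]) (by nlinarith [hρ.1])
    rw [← ENNReal.ofReal_mul (by positivity)]
    refine ENNReal.ofReal_le_ofReal (mul_le_mul_of_nonneg_left ?_ (by positivity))
    exact Real.rpow_le_rpow_of_nonpos (lt_max_of_lt_left hw') hle (by linarith)
  calc _ = ∫⁻ u in ball (0 : ℂ) 1, ENNReal.ofReal ((1 - ‖u‖) ^ (p - 2)) *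
          ENNReal.ofReal (‖1 - conj w * u‖ ^ (-p)) ∂dA :=
        setLIntegral_congr_fun measurableSet_ball fun u hu => ENNReal.ofReal_mul
          (Real.rpow_nonneg (sub_nonneg.2 (mem_ball_zero_iff.1 hu).le) _)
    _ ≤ C * ∫⁻ ρ in Ioo (0 : ℝ) 1,
          ENNReal.ofReal ((1 - ρ) ^ (p - 2) * max (1 - ‖w‖) (1 - ρ) ^ (1 - p)) :=
        (hC w hw (fun ρ => ENNReal.ofReal ((1 - ρ) ^ (p - 2))) (by fun_prop)).trans
          (mul_le_mul' le_rfl (setLIntegral_mono' measurableSet_Ioo hmax))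
    _ ≤ C * ENNReal.ofReal ((1 / ((p - 1) * Real.log 2) + 1) * logWeight w) := by
        rw [setLIntegral_Ioo_comp_sub_left
          fun x => ENNReal.ofReal (x ^ (p - 2) * max (1 - ‖w‖) x ^ (1 - p))]
        gcongr
        exact (lintegral_Ioo_rpow_mul_max_rpow_le hp hw' (by linarith [norm_nonneg w])).trans
          (ENNReal.ofReal_le_ofReal (one_div_add_log_le_mul_logWeight hp hw))
    _ = _ := by
        rw [ENNReal.ofReal_mul' (logWeight_pos hw).le, ENNReal.coe_mul, mul_assoc]
        rfl

/-! ### Reproducing formula -/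

theorem enorm_circleAverage_le {E : Type*} [NormedAddCommGroup E] [NormedSpace ℝ E] (f : ℂ → E)
    (c : ℂ) (R : ℝ) :
    ‖circleAverage f c R‖ₑ ≤
      ENNReal.ofReal (2 * π)⁻¹ * ∫⁻ θ in Ioo (-π) π, ‖f (circleMap c R θ)‖ₑ := by
  have hshift : circleAverage f c R = (2 * π)⁻¹ • ∫ θ in (-π)..π, f (circleMap c R θ) := by
    rw [circleAverage_eq_integral_add (-π),
      intervalIntegral.integral_comp_add_right fun θ => f (circleMap c R θ)]
    ring_nf
  rw [hshift, enorm_smul, Real.enorm_of_nonneg (by positivity),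
    intervalIntegral.integral_of_le (by linarith [pi_pos]), setLIntegral_congr Ioo_ae_eq_Ioc]
  gcongr
  exact enorm_integral_le_lintegral_enorm _

namespace HolOn

protected theorem deriv {f : ℂ → ℂ} (hf : HolOn f) : HolOn (deriv f) :=
  DifferentiableOn.deriv hf isOpen_ball

theorem differentiableAt {f : ℂ → ℂ} (hf : HolOn f) {z : ℂ} (hz : z ∈ ball (0 : ℂ) 1) :
    DifferentiableAt ℂ f z :=
  DifferentiableOn.differentiableAt hf (isOpen_ball.mem_nhds hz)

theorem diffContOnCl {f : ℂ → ℂ} (hf : HolOn f) {c : ℂ} {r : ℝ}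
    (h : closedBall c r ⊆ ball 0 1) : DiffContOnCl ℂ f (ball c r) :=
  (DifferentiableOn.mono hf (closure_ball_subset_closedBall.trans h)).diffContOnCl

theorem circleAverage_div_one_sub_conj_mul {f : ℂ → ℂ} (hf : HolOn f) {w : ℂ}
    (hw : w ∈ ball (0 : ℂ) 1) {ρ : ℝ} (hρ₀ : 0 < ρ) (hρ₁ : ρ < 1) :
    circleAverage (fun u => f u / (1 - w * conj u)) 0 ρ = f (w * ρ ^ 2) := by
  rw [mem_ball_zero_iff] at hw
  have hmem : w * (ρ : ℂ) ^ 2 ∈ ball (0 : ℂ) |ρ| := by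
    rw [mem_ball_zero_iff, norm_mul, norm_pow, Complex.norm_real, Real.norm_eq_abs,
      abs_of_pos hρ₀]
    nlinarith [mul_pos hρ₀ hρ₀]
  -- On `|u| = ρ` the kernel `1 / (1 - w * conj u)` is the Cauchy kernel `u / (u - w * ρ ^ 2)`.
  rw [← (hf.diffContOnCl (closedBall_subset_ball (by rwa [abs_of_pos hρ₀]))).circleAverage_smul_div
    hmem]
  refine circleAverage_congr_sphere fun u hu => ?_
  have hnorm : ‖u‖ = ρ := by rwa [mem_sphere_zero_iff_norm, abs_of_pos hρ₀] at hu
  have hu₀ : u ≠ 0 := norm_pos_iff.1 (hnorm ▸ hρ₀)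
  have hconj : (ρ : ℂ) ^ 2 = u * conj u := by rw [Complex.mul_conj', hnorm]
  simp only [smul_eq_mul, sub_zero]
  rw [hconj, show u - w * (u * conj u) = u * (1 - w * conj u) by ring, div_mul_eq_div_div,
    div_self hu₀, one_div_mul_eq_div]

/-- The parametrisation by `ρ ^ 2` makes the integrand a mean of `f' / (1 - w * conj u)` over
`|u| = ρ`, see `circleAverage_div_one_sub_conj_mul`. -/
theorem sub_eq_integral_deriv {f : ℂ → ℂ} (hf : HolOn f) {w : ℂ} (hw : w ∈ ball (0 : ℂ) 1) :
    f w - f 0 = ∫ ρ in (0 : ℝ)..1, deriv f (w * ρ ^ 2) * (w * (2 * ρ)) := by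
  have hmem (ρ : ℝ) (hρ : ρ ∈ uIcc (0 : ℝ) 1) : w * (ρ : ℂ) ^ 2 ∈ ball (0 : ℂ) 1 := by
    rw [uIcc_of_le zero_le_one] at hρ
    rw [mem_ball_zero_iff, norm_mul, norm_pow, Complex.norm_real, Real.norm_of_nonneg hρ.1]
    rw [mem_ball_zero_iff] at hw
    nlinarith [norm_nonneg w, pow_le_one₀ hρ.1 hρ.2 (n := 2), sq_nonneg ρ]
  have hderiv (ρ : ℝ) (hρ : ρ ∈ uIcc (0 : ℝ) 1) : HasDerivAt (fun ρ : ℝ => f (w * (ρ : ℂ) ^ 2))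
      (deriv f (w * (ρ : ℂ) ^ 2) * (w * (2 * ρ))) ρ := by
    have hinner : HasDerivAt (fun ρ : ℂ => w * ρ ^ 2) (w * (2 * (ρ : ℂ))) (ρ : ℂ) := by
      simpa using (hasDerivAt_pow 2 (ρ : ℂ)).const_mul w
    exact ((hf.differentiableAt (hmem ρ hρ)).hasDerivAt.comp (ρ : ℂ) hinner).comp_ofReal
  have hcont : ContinuousOn (fun ρ : ℝ => deriv f (w * (ρ : ℂ) ^ 2) * (w * (2 * ρ)))
      (uIcc 0 1) :=
    (hf.deriv.continuousOn.comp (by fun_prop) hmem).mul (by fun_prop)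
  rw [intervalIntegral.integral_eq_sub_of_hasDerivAt hderiv hcont.intervalIntegrable]
  simp

theorem enorm_sub_le_lintegral_deriv {f : ℂ → ℂ} (hf : HolOn f) {w : ℂ}
    (hw : w ∈ ball (0 : ℂ) 1) :
    ‖f w - f 0‖ₑ ≤ ∫⁻ u in ball (0 : ℂ) 1, ‖deriv f u / (1 - w * conj u)‖ₑ ∂dA := by
  have hmeas : Measurable fun u => ‖deriv f u / (1 - w * conj u)‖ₑ := by
    have := Complex.continuous_conj.measurable
    have := measurable_deriv f
    fun_prop
  have hcircle (ρ : ℝ) (hρ : ρ ∈ Ioo (0 : ℝ) 1) :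
      ‖deriv f (w * ρ ^ 2) * (w * (2 * ρ))‖ₑ ≤ ENNReal.ofReal (2 * ρ) * (ENNReal.ofReal (2 * π)⁻¹ *
        ∫⁻ θ in Ioo (-π) π, ‖deriv f (circleMap 0 ρ θ) / (1 - w * conj (circleMap 0 ρ θ))‖ₑ) := by
    have hfactor : ‖w * (2 * ρ)‖ₑ ≤ ENNReal.ofReal (2 * ρ) := by
      rw [← ofReal_norm, norm_mul, norm_mul, Complex.norm_real, Real.norm_of_nonneg hρ.1.le,
        Complex.norm_ofNat]
      exact ENNReal.ofReal_le_ofReal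
        (mul_le_of_le_one_left (by linarith [hρ.1]) (mem_ball_zero_iff.1 hw).le)
    rw [enorm_mul, mul_comm, ← hf.deriv.circleAverage_div_one_sub_conj_mul hw hρ.1 hρ.2]
    exact mul_le_mul' hfactor (enorm_circleAverage_le _ _ _)
  rw [hf.sub_eq_integral_deriv hw, intervalIntegral.integral_of_le zero_le_one,
    setLIntegral_dA_ball_eq_polar hmeas]
  refine (enorm_integral_le_lintegral_enorm _).trans ?_
  rw [setLIntegral_congr Ioo_ae_eq_Ioc.symm]
  exact setLIntegral_mono' measurableSet_Ioo hcircle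

theorem enorm_apply_zero_le_lintegral {f : ℂ → ℂ} (hf : HolOn f) (hfm : Measurable f) :
    ‖f 0‖ₑ ≤ ∫⁻ u in ball (0 : ℂ) 1, ‖f u‖ₑ ∂dA := by
  have hmass : ∫⁻ ρ in Ioo (0 : ℝ) 1, ENNReal.ofReal (2 * ρ) = 1 := by
    have hρ := lintegral_Ioc_rpow (a := 1) (c := 1) (by norm_num) zero_le_one
    simp only [Real.rpow_one] at hρ
    simp only [ENNReal.ofReal_mul zero_le_two]
    rw [lintegral_const_mul _ (by fun_prop), setLIntegral_congr Ioo_ae_eq_Ioc, hρ,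
      ← ENNReal.ofReal_mul zero_le_two]
    norm_num
  calc ‖f 0‖ₑ = ∫⁻ ρ in Ioo (0 : ℝ) 1, ENNReal.ofReal (2 * ρ) * ‖f 0‖ₑ := by
        rw [lintegral_mul_const' _ _ enorm_ne_top, hmass, one_mul]
    _ ≤ ∫⁻ ρ in Ioo (0 : ℝ) 1, ENNReal.ofReal (2 * ρ) *
          (ENNReal.ofReal (2 * π)⁻¹ * ∫⁻ θ in Ioo (-π) π, ‖f (circleMap 0 ρ θ)‖ₑ) := by
        refine setLIntegral_mono' measurableSet_Ioo fun ρ hρ => mul_le_mul' le_rfl ?_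
        have hmean : circleAverage f 0 ρ = f 0 := by
          simpa using hf.circleAverage_div_one_sub_conj_mul (mem_ball_self one_pos) hρ.1 hρ.2
        exact hmean ▸ enorm_circleAverage_le f 0 ρ
    _ = ∫⁻ u in ball (0 : ℂ) 1, ‖f u‖ₑ ∂dA := (setLIntegral_dA_ball_eq_polar hfm.enorm 1).symm

end HolOn

/-! ### Möbius transformations -/

theorem setLIntegral_dA_image {f : ℂ → ℂ} {S : Set ℂ} (hS : MeasurableSet S)
    (hf : ∀ z ∈ S, DifferentiableAt ℂ f z) (hinj : InjOn f S) (F : ℂ → ℝ≥0∞) :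
    ∫⁻ w in f '' S, F w ∂dA = ∫⁻ z in S, ‖deriv f z‖ₑ ^ 2 * F (f z) ∂dA := by
  have hdet (c : ℂ) :
      |((ContinuousLinearMap.toSpanSingleton ℂ c).restrictScalars ℝ).det| = ‖c‖ ^ 2 := by
    rw [ContinuousLinearMap.det, ContinuousLinearMap.coe_restrictScalars,
      LinearMap.det_restrictScalars]
    simp [Algebra.norm_complex_eq, Complex.normSq_eq_norm_sq]
  rw [setLIntegral_dA, setLIntegral_dA, lintegral_image_eq_lintegral_abs_det_fderiv_mul volume hS
    (fun z hz => ((hf z hz).hasDerivAt.hasFDerivAt.restrictScalars ℝ).hasFDerivWithinAt) hinj]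
  simp only [hdet, ENNReal.ofReal_pow (norm_nonneg _), ofReal_norm]

theorem phi_zero_right (a : ℂ) : phi a 0 = a := by simp [phi]

theorem norm_phi_comm (a z : ℂ) : ‖phi a z‖ = ‖phi z a‖ := by
  rw [phi, phi, norm_div, norm_div, norm_sub_rev, norm_one_sub_conj_mul_comm]

theorem measurable_phi_uncurry : Measurable fun x : ℂ × ℂ => phi x.1 x.2 := by
  have := Complex.continuous_conj.measurable
  unfold phi
  fun_prop

theorem one_sub_norm_sq_pos {z : ℂ} (hz : z ∈ ball (0 : ℂ) 1) : 0 < 1 - ‖z‖ ^ 2 :=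
  sub_pos.2 (pow_lt_one₀ (norm_nonneg z) (mem_ball_zero_iff.1 hz) two_ne_zero)

theorem one_sub_norm_phi_sq {a z : ℂ} (ha : a ∈ ball (0 : ℂ) 1) (hz : z ∈ ball (0 : ℂ) 1) :
    1 - ‖phi a z‖ ^ 2 = (1 - ‖a‖ ^ 2) * (1 - ‖z‖ ^ 2) / ‖1 - conj a * z‖ ^ 2 := by
  have hden : ‖1 - conj a * z‖ ^ 2 ≠ 0 :=
    pow_ne_zero 2 (norm_ne_zero_iff.2 (one_sub_conj_mul_ne_zero ha hz))
  rw [phi, norm_div, div_pow, eq_div_iff hden, sub_mul, div_mul_cancel₀ _ hden]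
  simp only [← Complex.normSq_eq_norm_sq, Complex.normSq_apply, Complex.sub_re, Complex.sub_im,
    Complex.one_re, Complex.one_im, Complex.mul_re, Complex.mul_im, Complex.conj_re,
    Complex.conj_im]
  ring

theorem phi_mem_ball {a z : ℂ} (ha : a ∈ ball (0 : ℂ) 1) (hz : z ∈ ball (0 : ℂ) 1) :
    phi a z ∈ ball (0 : ℂ) 1 := by
  have hpos : 0 < 1 - ‖phi a z‖ ^ 2 := by
    have hden := norm_pos_iff.2 (one_sub_conj_mul_ne_zero ha hz)
    have ha' := one_sub_norm_sq_pos ha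
    have hz' := one_sub_norm_sq_pos hz
    rw [one_sub_norm_phi_sq ha hz]
    positivity
  rw [mem_ball_zero_iff, ← sq_lt_one_iff₀ (norm_nonneg _)]
  linarith

theorem phi_phi {a z : ℂ} (ha : a ∈ ball (0 : ℂ) 1) (hz : z ∈ ball (0 : ℂ) 1) :
    phi a (phi a z) = z := by
  have hden := one_sub_conj_mul_ne_zero ha hz
  have hcancel : phi a z * (1 - conj a * z) = a - z := div_mul_cancel₀ _ hden
  rw [phi, div_eq_iff (one_sub_conj_mul_ne_zero ha (phi_mem_ball ha hz))]
  refine mul_right_cancel₀ hden ?_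
  linear_combination (-1 + z * conj a) * hcancel

theorem injOn_phi {a : ℂ} (ha : a ∈ ball (0 : ℂ) 1) : InjOn (phi a) (ball 0 1) :=
  LeftInvOn.injOn fun _ hz => phi_phi ha hz

theorem image_phi_ball {a : ℂ} (ha : a ∈ ball (0 : ℂ) 1) : phi a '' ball 0 1 = ball 0 1 :=
  Subset.antisymm (image_subset_iff.2 fun _ hz => phi_mem_ball ha hz)
    fun z hz => ⟨phi a z, phi_mem_ball ha hz, phi_phi ha hz⟩

theorem holOn_phi {a : ℂ} (ha : a ∈ ball (0 : ℂ) 1) : HolOn (phi a) := by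
  unfold phi
  exact DifferentiableOn.div (by fun_prop) (by fun_prop) fun z hz => one_sub_conj_mul_ne_zero ha hz

theorem norm_phi_phi_phi {a v z : ℂ} (ha : a ∈ ball (0 : ℂ) 1) (hv : v ∈ ball (0 : ℂ) 1)
    (hz : z ∈ ball (0 : ℂ) 1) : ‖phi (phi a v) (phi a z)‖ = ‖phi v z‖ := by
  have hdv := one_sub_conj_mul_ne_zero ha hv
  have hdz := one_sub_conj_mul_ne_zero ha hz
  have hdv' : conj (1 - conj a * v) ≠ 0 := (map_ne_zero conj).2 hdv
  have hnum : phi a v - phi a z = (1 - conj a * a) * (z - v) /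
      ((1 - conj a * v) * (1 - conj a * z)) := by
    rw [phi, phi, div_sub_div _ _ hdv hdz]
    ring
  have hden : 1 - conj (phi a v) * phi a z = (1 - conj a * a) * (1 - conj v * z) /
      (conj (1 - conj a * v) * (1 - conj a * z)) := by
    rw [phi, phi, map_div₀, div_mul_div_comm, one_sub_div (mul_ne_zero hdv' hdz)]
    simp only [map_sub, map_mul, map_one, Complex.conj_conj]
    ring
  have hda := norm_ne_zero_iff.2 (one_sub_conj_mul_ne_zero ha ha)
  rw [phi, hnum, hden, phi]
  simp only [norm_div, norm_mul, Complex.norm_conj, norm_sub_rev z v]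
  rw [div_div_div_cancel_right₀ (mul_ne_zero (norm_ne_zero_iff.2 hdv) (norm_ne_zero_iff.2 hdz)),
    mul_div_mul_left _ _ hda]

/-! ### Oscillation estimates -/

/-- The Dirichlet integral `∫_D |f'|² dA`. -/
def dirichletIntegral (f : ℂ → ℂ) : ℝ≥0∞ := ∫⁻ z in ball 0 1, ‖deriv f z‖ₑ ^ 2 ∂dA

/-- The measure `|g'|² (1 - |φ_a|²)^s dA` on the unit disc. Its total mass is the integral defining
`Q_s`, and `T_g f` belongs to `Q_s` when its integrals of `|f|²` are bounded in `a`. -/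
def qsMeasure (s : ℝ) (g : ℂ → ℂ) (a : ℂ) : Measure ℂ :=
  (dA.restrict (ball 0 1)).withDensity
    fun z => ‖deriv g z‖ₑ ^ 2 * ENNReal.ofReal ((1 - ‖phi a z‖ ^ 2) ^ s)

theorem measurable_ofReal_one_sub_norm_phi_sq_rpow (s : ℝ) (a : ℂ) :
    Measurable fun z => ENNReal.ofReal ((1 - ‖phi a z‖ ^ 2) ^ s) := by
  have := measurable_phi_uncurry.comp (measurable_prodMk_left (x := a))
  fun_prop

theorem lintegral_qsMeasure (s : ℝ) (g : ℂ → ℂ) (a : ℂ) (F : ℂ → ℝ≥0∞) :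
    ∫⁻ z, F z ∂qsMeasure s g a = ∫⁻ z in ball (0 : ℂ) 1,
      ‖deriv g z‖ₑ ^ 2 * ENNReal.ofReal ((1 - ‖phi a z‖ ^ 2) ^ s) * F z ∂dA := by
  have := measurable_deriv g
  have hphi := measurable_ofReal_one_sub_norm_phi_sq_rpow s a
  exact lintegral_withDensity_eq_lintegral_mul_non_measurable _ (by fun_prop)
    (ae_of_all _ fun z => ENNReal.mul_lt_top (by finiteness) ENNReal.ofReal_lt_top) F

theorem qsMeasure_univ (s : ℝ) (g : ℂ → ℂ) (a : ℂ) :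
    qsMeasure s g a univ = ∫⁻ z in ball (0 : ℂ) 1,
      ‖deriv g z‖ₑ ^ 2 * ENNReal.ofReal ((1 - ‖phi a z‖ ^ 2) ^ s) ∂dA := by
  rw [← lintegral_one, lintegral_qsMeasure]
  simp only [mul_one]

theorem qsMeasure_comp_phi (s : ℝ) {f : ℂ → ℂ} (hf : HolOn f) {a w : ℂ} (ha : a ∈ ball (0 : ℂ) 1)
    (hw : w ∈ ball (0 : ℂ) 1) :
    qsMeasure s (f ∘ phi a) w univ = qsMeasure s f (phi a w) univ := by
  have hdiff (v : ℂ) (hv : v ∈ ball (0 : ℂ) 1) : DifferentiableAt ℂ (phi a) v :=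
    (holOn_phi ha).differentiableAt hv
  rw [qsMeasure_univ, qsMeasure_univ]
  conv_rhs =>
    rw [← image_phi_ball ha, setLIntegral_dA_image measurableSet_ball hdiff (injOn_phi ha)]
  refine setLIntegral_congr_fun measurableSet_ball fun v hv => ?_
  rw [norm_phi_phi_phi ha hw hv,
    ((hf.differentiableAt (phi_mem_ball ha hv)).hasDerivAt.comp v (hdiff v hv).hasDerivAt).deriv,
    enorm_mul, mul_pow, mul_comm (‖deriv f _‖ₑ ^ 2), mul_assoc]

theorem HolOn.enorm_sub_sq_le {f : ℂ → ℂ} (hf : HolOn f) {w : ℂ} (hw : w ∈ ball (0 : ℂ) 1)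
    {V : ℂ → ℝ} (hV : Measurable V) (hV₀ : ∀ u ∈ ball (0 : ℂ) 1, 0 < V u) :
    ‖f w - f 0‖ₑ ^ 2 ≤ (∫⁻ u in ball (0 : ℂ) 1, ‖deriv f u‖ₑ ^ 2 * ENNReal.ofReal (V u) ∂dA) *
      ∫⁻ u in ball (0 : ℂ) 1, ENNReal.ofReal ((‖1 - conj w * u‖ ^ 2 * V u)⁻¹) ∂dA := by
  have := Complex.continuous_conj.measurable
  have := measurable_deriv f
  have hsplit (u : ℂ) (hu : u ∈ ball (0 : ℂ) 1) : ‖deriv f u / (1 - w * conj u)‖ₑ =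
      ‖deriv f u‖ₑ * ENNReal.ofReal (√(V u)) *
        ENNReal.ofReal ((‖1 - conj w * u‖ * √(V u))⁻¹) := by
    have hsqrt : 0 < √(V u) := Real.sqrt_pos.2 (hV₀ u hu)
    rw [← ofReal_norm, ← ofReal_norm, ← ENNReal.ofReal_mul (norm_nonneg _),
      ← ENNReal.ofReal_mul (by positivity), norm_div, mul_comm w, norm_one_sub_conj_mul_comm u w]
    congr 1
    field_simp
  calc ‖f w - f 0‖ₑ ^ 2
      ≤ (∫⁻ u in ball (0 : ℂ) 1, ‖deriv f u‖ₑ * ENNReal.ofReal (√(V u)) *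
          ENNReal.ofReal ((‖1 - conj w * u‖ * √(V u))⁻¹) ∂dA) ^ 2 := by
        rw [← setLIntegral_congr_fun measurableSet_ball hsplit]
        exact pow_le_pow_left' (hf.enorm_sub_le_lintegral_deriv hw) 2
    _ ≤ _ := lintegral_mul_sq_le (by fun_prop) (by fun_prop)
    _ = _ := by
        congr 1 <;> refine setLIntegral_congr_fun measurableSet_ball fun u hu => ?_
        · rw [mul_pow, ← ENNReal.ofReal_pow (Real.sqrt_nonneg _), Real.sq_sqrt (hV₀ u hu).le]
        · rw [← ENNReal.ofReal_pow (by positivity), inv_pow, mul_pow, Real.sq_sqrt (hV₀ u hu).le]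

theorem one_sub_norm_sq_rpow_mul_le {s : ℝ} (hs : 0 ≤ s) {w u : ℂ} (hw : w ∈ ball (0 : ℂ) 1)
    (hu : u ∈ ball (0 : ℂ) 1) :
    (1 - ‖w‖ ^ 2) ^ s * (‖1 - conj w * u‖ ^ 2 * (1 - ‖phi w u‖ ^ 2) ^ s)⁻¹ ≤
      (1 - ‖u‖) ^ (-s) * ‖1 - conj w * u‖ ^ (-(2 - 2 * s)) := by
  have hden := norm_pos_iff.2 (one_sub_conj_mul_ne_zero hw hu)
  have hu' : 0 < 1 - ‖u‖ := sub_pos.2 (mem_ball_zero_iff.1 hu)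
  have hu₂ := one_sub_norm_sq_pos hu
  have hw₂ := one_sub_norm_sq_pos hw
  calc _ = (1 - ‖u‖ ^ 2) ^ (-s) * ‖1 - conj w * u‖ ^ (-(2 - 2 * s)) := by
        rw [one_sub_norm_phi_sq hw hu, Real.div_rpow (by positivity) (by positivity),
          Real.mul_rpow hw₂.le hu₂.le, Real.rpow_neg hu₂.le, neg_sub, Real.rpow_sub hden,
          Real.rpow_mul hden.le, Real.rpow_two]
        field_simp
    _ ≤ _ := by
        refine mul_le_mul_of_nonneg_right ?_ (by positivity)
        exact Real.rpow_le_rpow_of_nonpos hu' (by nlinarith [norm_nonneg u]) (by linarith)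

theorem exists_enorm_sub_apply_zero_sq_le {s : ℝ} (hs₀ : 0 < s) (hs₁ : s < 1) :
    ∃ C : ℝ≥0, ∀ f, HolOn f → ∀ w ∈ ball (0 : ℂ) 1,
      ENNReal.ofReal ((1 - ‖w‖ ^ 2) ^ s) * ‖f w - f 0‖ₑ ^ 2 ≤ C * qsMeasure s f w univ := by
  obtain ⟨C, hC⟩ :=
    exists_lintegral_kernel_le (t := -s) (q := 2 - 2 * s) (by linarith) (by linarith)
  refine ⟨C, fun f hf w hw => ?_⟩
  have hweight (u : ℂ) (hu : u ∈ ball (0 : ℂ) 1) : ENNReal.ofReal ((1 - ‖w‖ ^ 2) ^ s) *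
      ENNReal.ofReal ((‖1 - conj w * u‖ ^ 2 * (1 - ‖phi w u‖ ^ 2) ^ s)⁻¹) ≤
        ENNReal.ofReal ((1 - ‖u‖) ^ (-s) * ‖1 - conj w * u‖ ^ (-(2 - 2 * s))) := by
    rw [← ENNReal.ofReal_mul (Real.rpow_nonneg (one_sub_norm_sq_pos hw).le s)]
    exact ENNReal.ofReal_le_ofReal (one_sub_norm_sq_rpow_mul_le hs₀.le hw hu)
  have hVpos (u : ℂ) (hu : u ∈ ball (0 : ℂ) 1) : 0 < (1 - ‖phi w u‖ ^ 2) ^ s :=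
    Real.rpow_pos_of_pos (one_sub_norm_sq_pos (phi_mem_ball hw hu)) s
  have hVmeas : Measurable fun u => (1 - ‖phi w u‖ ^ 2) ^ s := by
    have := measurable_phi_uncurry.comp (measurable_prodMk_left (x := w))
    fun_prop
  calc _ ≤ ENNReal.ofReal ((1 - ‖w‖ ^ 2) ^ s) * (qsMeasure s f w univ * ∫⁻ u in ball (0 : ℂ) 1,
          ENNReal.ofReal ((‖1 - conj w * u‖ ^ 2 * (1 - ‖phi w u‖ ^ 2) ^ s)⁻¹) ∂dA) := by
        rw [qsMeasure_univ]
        exact mul_le_mul' le_rfl (hf.enorm_sub_sq_le hw hVmeas hVpos)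
    _ = (∫⁻ u in ball (0 : ℂ) 1, ENNReal.ofReal ((1 - ‖w‖ ^ 2) ^ s) *
          ENNReal.ofReal ((‖1 - conj w * u‖ ^ 2 * (1 - ‖phi w u‖ ^ 2) ^ s)⁻¹) ∂dA) *
            qsMeasure s f w univ := by
        rw [lintegral_const_mul' _ _ ENNReal.ofReal_ne_top]
        ring
    _ ≤ C * qsMeasure s f w univ :=
        mul_le_mul' ((setLIntegral_mono' measurableSet_ball hweight).trans (hC w hw)) le_rfl

theorem exists_enorm_sub_sq_le {s : ℝ} (hs₀ : 0 < s) (hs₁ : s < 1) :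
    ∃ C : ℝ≥0, ∀ f, HolOn f → ∀ a ∈ ball (0 : ℂ) 1, ∀ z ∈ ball (0 : ℂ) 1,
      ENNReal.ofReal ((1 - ‖phi a z‖ ^ 2) ^ s) * ‖f z - f a‖ₑ ^ 2 ≤ C * qsMeasure s f z univ := by
  obtain ⟨C, hC⟩ := exists_enorm_sub_apply_zero_sq_le hs₀ hs₁
  refine ⟨C, fun f hf a ha z hz => ?_⟩
  have hcomp : HolOn (f ∘ phi a) := DifferentiableOn.comp hf (holOn_phi ha) fun v => phi_mem_ball ha
  have hφz := phi_mem_ball ha hz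
  simpa [qsMeasure_comp_phi s hf ha hφz, phi_phi ha hz, phi_zero_right] using hC _ hcomp _ hφz

theorem exists_lintegral_qsMeasure_enorm_sub_sq_le {s : ℝ} (hs₀ : 0 < s) (hs₁ : s < 1) :
    ∃ C : ℝ≥0, ∀ f g : ℂ → ℂ, HolOn f → ∀ M : ℝ≥0∞,
      (∀ u ∈ ball (0 : ℂ) 1, qsMeasure s g u univ ≤ M) → ∀ a ∈ ball (0 : ℂ) 1,
        ∫⁻ z, ‖f z - f a‖ₑ ^ 2 ∂qsMeasure s g a ≤ C * (M * dirichletIntegral f) := by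
  obtain ⟨C, hC⟩ := exists_enorm_sub_sq_le hs₀ hs₁
  refine ⟨C, fun f g hf M hM a ha => ?_⟩
  have := measurable_deriv f
  have := measurable_deriv g
  have hmeas : Measurable fun x : ℂ × ℂ => ‖deriv g x.1‖ₑ ^ 2 * (‖deriv f x.2‖ₑ ^ 2 *
      ENNReal.ofReal ((1 - ‖phi x.1 x.2‖ ^ 2) ^ s)) := by
    have := measurable_phi_uncurry
    fun_prop
  calc ∫⁻ z, ‖f z - f a‖ₑ ^ 2 ∂qsMeasure s g a
      ≤ ∫⁻ z in ball (0 : ℂ) 1, C * (‖deriv g z‖ₑ ^ 2 * qsMeasure s f z univ) ∂dA := by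
        rw [lintegral_qsMeasure]
        refine setLIntegral_mono' measurableSet_ball fun z hz => ?_
        rw [mul_assoc, mul_left_comm (C : ℝ≥0∞)]
        exact mul_le_mul' le_rfl (hC f hf a ha z hz)
    _ = C * ∫⁻ z in ball (0 : ℂ) 1, ∫⁻ u in ball (0 : ℂ) 1, ‖deriv g z‖ₑ ^ 2 *
          (‖deriv f u‖ₑ ^ 2 * ENNReal.ofReal ((1 - ‖phi z u‖ ^ 2) ^ s)) ∂dA ∂dA := by
        rw [lintegral_const_mul' _ _ ENNReal.coe_ne_top]
        congr! 3 with z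
        rw [lintegral_const_mul' _ _ (by finiteness), qsMeasure_univ]
    _ = C * ∫⁻ u in ball (0 : ℂ) 1, ‖deriv f u‖ₑ ^ 2 * qsMeasure s g u univ ∂dA := by
        rw [lintegral_lintegral_swap hmeas.aemeasurable]
        congr! 3 with u
        rw [qsMeasure_univ, ← lintegral_const_mul' _ _ (by finiteness)]
        simp only [norm_phi_comm u, mul_left_comm]
    _ ≤ C * ∫⁻ u in ball (0 : ℂ) 1, ‖deriv f u‖ₑ ^ 2 * M ∂dA := by
        exact mul_le_mul' le_rfl (setLIntegral_mono' measurableSet_ball fun u hu =>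
          mul_le_mul' le_rfl (hM u hu))
    _ = C * (M * dirichletIntegral f) := by
        rw [lintegral_mul_const _ (by fun_prop), mul_comm M, dirichletIntegral]

theorem exists_enorm_sub_sq_le_logWeight_mul_dirichletIntegral :
    ∃ C : ℝ≥0, ∀ f, HolOn f → ∀ w ∈ ball (0 : ℂ) 1,
      ‖f w - f 0‖ₑ ^ 2 ≤ C * ENNReal.ofReal (logWeight w) * dirichletIntegral f := by
  obtain ⟨C, hC⟩ := exists_lintegral_kernel_le_logWeight one_lt_two
  refine ⟨C, fun f hf w hw => ?_⟩
  have hcs := hf.enorm_sub_sq_le hw (measurable_const (a := 1)) fun _ _ => one_pos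
  have hkernel := hC w hw
  simp only [sub_self, Real.rpow_zero, one_mul, Real.rpow_neg (norm_nonneg _), Real.rpow_two]
    at hkernel
  simp only [ENNReal.ofReal_one, mul_one] at hcs
  rw [mul_comm, dirichletIntegral]
  exact hcs.trans (mul_le_mul' le_rfl hkernel)

/-! ### Inclusions between Besov spaces -/

theorem dA_ball (a : ℂ) (r : ℝ) : dA (ball a r) = ENNReal.ofReal r ^ 2 := by
  rw [← setLIntegral_one, setLIntegral_dA, setLIntegral_one, Complex.volume_ball]
  have hπ : ENNReal.ofReal π = NNReal.pi := by
    rw [← NNReal.coe_real_pi, ENNReal.ofReal_coe_nnreal]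
  rw [hπ, mul_comm, mul_assoc, ENNReal.mul_inv_cancel (by simpa using NNReal.pi_pos.ne') (by simp),
    mul_one]

theorem image_add_mul_ball (z : ℂ) {r : ℝ} (hr : 0 < r) :
    (fun u => z + r * u) '' ball 0 1 = ball z r := by
  rw [← affinity_unitBall hr z, ← image_smul, ← image_vadd, image_image]
  simp [Complex.real_smul]

theorem HolOn.mul_enorm_le_lintegral_ball {f : ℂ → ℂ} (hf : HolOn f) (hfm : Measurable f) {z : ℂ}
    {r : ℝ} (hr : 0 < r) (h : ball z r ⊆ ball 0 1) :
    ENNReal.ofReal r ^ 2 * ‖f z‖ₑ ≤ ∫⁻ u in ball z r, ‖f u‖ₑ ∂dA := by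
  have hderiv (u : ℂ) : HasDerivAt (fun u : ℂ => z + r * u) r u := by
    simpa using ((hasDerivAt_id u).const_mul (r : ℂ)).const_add z
  have hinj : InjOn (fun u : ℂ => z + r * u) (ball 0 1) := fun u _ v _ huv => by
    simpa [hr.ne'] using huv
  have hcomp : HolOn (fun u => f (z + r * u)) :=
    DifferentiableOn.comp hf (fun u _ => (hderiv u).differentiableAt.differentiableWithinAt)
      (mapsTo_iff_image_subset.2 ((image_add_mul_ball z hr).trans_subset h))
  have hmean := hcomp.enorm_apply_zero_le_lintegral (by fun_prop)
  rw [← image_add_mul_ball z hr, setLIntegral_dA_image measurableSet_ball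
    (fun u _ => (hderiv u).differentiableAt) hinj]
  simp only [(hderiv _).deriv, mul_zero, add_zero] at hmean ⊢
  rw [lintegral_const_mul' _ _ (by finiteness), ← ofReal_norm (r : ℂ), Complex.norm_real,
    Real.norm_of_nonneg hr.le]
  exact mul_le_mul' le_rfl hmean

/-- The integral `∫_D (1 - |z|)^(p-2) |f'(z)|^p dA(z)` defining the Besov space `B^p`. -/
def besovIntegral (p : ℝ) (f : ℂ → ℂ) : ℝ≥0∞ :=
  ∫⁻ z in ball 0 1, ENNReal.ofReal ((1 - ‖z‖) ^ (p - 2) * ‖deriv f z‖ ^ p) ∂dA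

theorem besovIntegral_two (f : ℂ → ℂ) : besovIntegral 2 f = dirichletIntegral f := by
  simp [besovIntegral, dirichletIntegral, ENNReal.ofReal_pow, ofReal_norm]

theorem rpow_le_two_rpow_abs_mul_rpow {x y : ℝ} (t : ℝ) (hx : 0 < x) (hxy : x ≤ 2 * y)
    (hyx : y ≤ 2 * x) : x ^ t ≤ 2 ^ |t| * y ^ t := by
  have hy : 0 < y := by linarith
  rcases le_total 0 t with ht | ht
  · rw [abs_of_nonneg ht, ← Real.mul_rpow zero_le_two hy.le]
    exact Real.rpow_le_rpow hx.le hxy ht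
  · rw [abs_of_nonpos ht, Real.rpow_neg zero_le_two, inv_mul_eq_div,
      ← Real.div_rpow hy.le zero_le_two]
    exact Real.rpow_le_rpow_of_nonpos (by positivity) (by linarith) ht

theorem mul_le_one_add_sq_half_mul {p δ x y : ℝ} (hp : 1 ≤ p) (hδ : 0 < δ) (hδx : δ ≤ 2 * x)
    (hxδ : x ≤ 2 * δ) (hy : 0 ≤ y) :
    δ * y ≤ 1 + (δ / 2) ^ 2 * (4 * 2 ^ |p - 2|) * (x ^ (p - 2) * y ^ p) := by
  have hle : δ * y ≤ 1 + (δ * y) ^ p := by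
    have hδy : 0 ≤ (δ * y) ^ p := by positivity
    rcases le_total (δ * y) 1 with h | h
    · linarith
    · linarith [Real.self_le_rpow_of_one_le h hp]
  have hsplit : δ ^ p = δ ^ 2 * δ ^ (p - 2) := by
    rw [← Real.rpow_natCast, ← Real.rpow_add hδ]
    norm_num
  calc δ * y ≤ 1 + (δ * y) ^ p := hle
    _ = 1 + δ ^ 2 * δ ^ (p - 2) * y ^ p := by rw [Real.mul_rpow hδ.le hy, hsplit]
    _ ≤ 1 + δ ^ 2 * (2 ^ |p - 2| * x ^ (p - 2)) * y ^ p := by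
        gcongr
        exact rpow_le_two_rpow_abs_mul_rpow _ hδ hδx hxδ
    _ = _ := by ring

theorem ball_half_one_sub_norm_subset (z : ℂ) : ball z ((1 - ‖z‖) / 2) ⊆ ball 0 1 := by
  intro u hu
  rw [mem_ball_iff_norm] at hu
  rw [mem_ball_zero_iff]
  linarith [norm_le_norm_add_norm_sub' u z, norm_nonneg (u - z)]

theorem ofReal_one_sub_norm_mul_enorm_le {p : ℝ} (hp : 1 ≤ p) {z u : ℂ}
    (hz : z ∈ ball (0 : ℂ) 1) (hu : u ∈ ball z ((1 - ‖z‖) / 2)) (w : ℂ) :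
    ENNReal.ofReal (1 - ‖z‖) * ‖w‖ₑ ≤ 1 + ENNReal.ofReal ((1 - ‖z‖) / 2) ^ 2 *
      ENNReal.ofReal (4 * 2 ^ |p - 2|) * ENNReal.ofReal ((1 - ‖u‖) ^ (p - 2) * ‖w‖ ^ p) := by
  have hz' : 0 < 1 - ‖z‖ := sub_pos.2 (mem_ball_zero_iff.1 hz)
  have hu' : 0 < 1 - ‖u‖ :=
    sub_pos.2 (mem_ball_zero_iff.1 (ball_half_one_sub_norm_subset z hu))
  have hdist : |‖u‖ - ‖z‖| < (1 - ‖z‖) / 2 :=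
    (abs_norm_sub_norm_le u z).trans_lt (mem_ball_iff_norm.1 hu)
  rw [abs_lt] at hdist
  rw [← ofReal_norm, ← ENNReal.ofReal_mul hz'.le, ← ENNReal.ofReal_pow (by positivity),
    ← ENNReal.ofReal_mul (by positivity), ← ENNReal.ofReal_mul (by positivity),
    ← ENNReal.ofReal_one, ← ENNReal.ofReal_add zero_le_one (by positivity)]
  exact ENNReal.ofReal_le_ofReal (mul_le_one_add_sq_half_mul hp hz' (by linarith) (by linarith)
    (norm_nonneg w))

theorem exists_one_sub_norm_mul_norm_deriv_le {p : ℝ} (hp : 1 ≤ p) {f : ℂ → ℂ} (hf : f ∈ Besov p) :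
    ∃ M : ℝ≥0, ∀ z ∈ ball (0 : ℂ) 1, (1 - ‖z‖) * ‖deriv f z‖ ≤ M := by
  obtain ⟨hf, hfin : besovIntegral p f < ⊤⟩ := hf
  set K := 1 + ENNReal.ofReal (4 * 2 ^ |p - 2|) * besovIntegral p f
  have hK : K ≠ ⊤ := by finiteness
  refine ⟨K.toNNReal, fun z hz => ?_⟩
  have hz' : 0 < 1 - ‖z‖ := sub_pos.2 (mem_ball_zero_iff.1 hz)
  rw [ENNReal.coe_toNNReal_eq_toReal, ← ENNReal.ofReal_le_iff_le_toReal hK,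
    ENNReal.ofReal_mul hz'.le, ofReal_norm]
  set r := (1 - ‖z‖) / 2
  have hr₀ : ENNReal.ofReal r ^ 2 ≠ 0 := by positivity
  have hball : ball z r ⊆ ball 0 1 := ball_half_one_sub_norm_subset z
  rw [← ENNReal.mul_le_mul_iff_right hr₀ (by finiteness)]
  calc ENNReal.ofReal r ^ 2 * (ENNReal.ofReal (1 - ‖z‖) * ‖deriv f z‖ₑ)
      ≤ ENNReal.ofReal (1 - ‖z‖) * ∫⁻ u in ball z r, ‖deriv f u‖ₑ ∂dA := by
        rw [mul_left_comm]
        exact mul_le_mul' le_rfl (hf.deriv.mul_enorm_le_lintegral_ball (measurable_deriv f)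
          (by positivity) hball)
    _ ≤ ∫⁻ u in ball z r, (1 + ENNReal.ofReal r ^ 2 * ENNReal.ofReal (4 * 2 ^ |p - 2|) *
          ENNReal.ofReal ((1 - ‖u‖) ^ (p - 2) * ‖deriv f u‖ ^ p)) ∂dA := by
        rw [← lintegral_const_mul' _ _ ENNReal.ofReal_ne_top]
        exact setLIntegral_mono' measurableSet_ball fun u hu =>
          ofReal_one_sub_norm_mul_enorm_le hp hz hu _
    _ ≤ ENNReal.ofReal r ^ 2 * K := by
        rw [lintegral_add_left measurable_const, lintegral_const_mul' _ _ (by finiteness),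
          setLIntegral_one, dA_ball, mul_add, mul_one, ← mul_assoc]
        exact add_le_add le_rfl (mul_le_mul' le_rfl (lintegral_mono_set hball))

theorem besovIntegral_le_of_one_sub_norm_mul_norm_deriv_le {p q : ℝ} (hp : 0 < p) (hpq : p ≤ q)
    {f : ℂ → ℂ} {M : ℝ≥0} (hM : ∀ z ∈ ball (0 : ℂ) 1, (1 - ‖z‖) * ‖deriv f z‖ ≤ M) :
    besovIntegral q f ≤ ENNReal.ofReal (M ^ (q - p)) * besovIntegral p f := by
  rw [besovIntegral, besovIntegral, ← lintegral_const_mul' _ _ ENNReal.ofReal_ne_top]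
  refine setLIntegral_mono' measurableSet_ball fun z hz => ?_
  have hz' : 0 < 1 - ‖z‖ := sub_pos.2 (mem_ball_zero_iff.1 hz)
  rw [← ENNReal.ofReal_mul (by positivity)]
  refine ENNReal.ofReal_le_ofReal ?_
  calc (1 - ‖z‖) ^ (q - 2) * ‖deriv f z‖ ^ q
      = ((1 - ‖z‖) * ‖deriv f z‖) ^ (q - p) * ((1 - ‖z‖) ^ (p - 2) * ‖deriv f z‖ ^ p) := by
        rw [Real.mul_rpow hz'.le (norm_nonneg _), mul_mul_mul_comm, ← Real.rpow_add hz',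
          ← Real.rpow_add_of_nonneg (norm_nonneg _) (sub_nonneg.2 hpq) hp.le]
        ring_nf
    _ ≤ _ := by
        have := hM z hz
        have := sub_nonneg.2 hpq
        gcongr

theorem Besov_subset_Besov {p q : ℝ} (hp : 1 ≤ p) (hpq : p ≤ q) : Besov p ⊆ Besov q := by
  intro f hf
  obtain ⟨M, hM⟩ := exists_one_sub_norm_mul_norm_deriv_le hp hf
  exact ⟨hf.1, (besovIntegral_le_of_one_sub_norm_mul_norm_deriv_le (by linarith) hpq hM).trans_lt
    (ENNReal.mul_lt_top ENNReal.ofReal_lt_top hf.2)⟩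

/-! ### The Volterra operator -/

theorem mem_Qs_iff {s : ℝ} {f : ℂ → ℂ} :
    f ∈ Qs s ↔ HolOn f ∧ ⨆ a ∈ ball (0 : ℂ) 1, qsMeasure s f a univ < ⊤ := by
  simp only [Qs, qsMeasure_univ, mem_ofPred_eq, ENNReal.ofReal_mul (sq_nonneg _),
    ENNReal.ofReal_pow (norm_nonneg _), ofReal_norm]

theorem mem_QsLog_iff {s α : ℝ} {f : ℂ → ℂ} :
    f ∈ QsLog s α ↔ HolOn f ∧ ⨆ a ∈ ball (0 : ℂ) 1,
      ENNReal.ofReal (logWeight a ^ (2 * α)) * qsMeasure s f a univ < ⊤ := by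
  simp only [QsLog, logWeight, qsMeasure_univ, mem_ofPred_eq, ENNReal.ofReal_mul (sq_nonneg _),
    ENNReal.ofReal_pow (norm_nonneg _), ofReal_norm]

theorem HolOn.hasDerivAt_Tg {g f : ℂ → ℂ} (hg : HolOn g) (hf : HolOn f) {z : ℂ}
    (hz : z ∈ ball (0 : ℂ) 1) : HasDerivAt (Tg g f) (deriv g z * f z) z := by
  have hprod : HolOn fun z => deriv g z * f z := DifferentiableOn.mul hg.deriv hf
  obtain ⟨P, hP⟩ := hprod.isExactOn_ball
  have hTg : EqOn (Tg g f) (fun w => P w - P 0) (ball 0 1) := fun w hw => by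
    have hray (t : ℝ) (ht : t ∈ uIcc (0 : ℝ) 1) : (t : ℂ) * w ∈ ball (0 : ℂ) 1 := by
      rw [uIcc_of_le zero_le_one] at ht
      rw [mem_ball_zero_iff] at hw ⊢
      rw [norm_mul, Complex.norm_real, Real.norm_of_nonneg ht.1]
      exact (mul_le_of_le_one_left (norm_nonneg w) ht.2).trans_lt hw
    have hderiv (t : ℝ) (ht : t ∈ uIcc (0 : ℝ) 1) : HasDerivAt (fun t : ℝ => P (t * w))
        (deriv g (t * w) * f (t * w) * w) t :=
      (hP _ (hray t ht)).comp t (by simpa using (Complex.ofRealCLM.hasDerivAt (x := t)).mul_const w)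
    have hcont : ContinuousOn (fun t : ℝ => deriv g (t * w) * f (t * w) * w) (uIcc 0 1) :=
      (hprod.continuousOn.comp (f := fun t : ℝ => (t : ℂ) * w) (by fun_prop) hray).mul
        continuousOn_const
    have hFTC := intervalIntegral.integral_eq_sub_of_hasDerivAt hderiv hcont.intervalIntegrable
    rw [intervalIntegral.integral_mul_const] at hFTC
    simpa [Tg, mul_comm] using hFTC
  exact ((hP z hz).sub_const (P 0)).congr_of_eventuallyEq
    (hTg.eventuallyEq_of_mem (isOpen_ball.mem_nhds hz))

theorem HolOn.Tg {g f : ℂ → ℂ} (hg : HolOn g) (hf : HolOn f) : HolOn (Tg g f) := fun _ hz =>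
  (hg.hasDerivAt_Tg hf hz).differentiableAt.differentiableWithinAt

theorem qsMeasure_Tg_univ (s : ℝ) {g f : ℂ → ℂ} (hg : HolOn g) (hf : HolOn f) (a : ℂ) :
    qsMeasure s (Tg g f) a univ = ∫⁻ z, ‖f z‖ₑ ^ 2 ∂qsMeasure s g a := by
  rw [qsMeasure_univ, lintegral_qsMeasure]
  refine setLIntegral_congr_fun measurableSet_ball fun z hz => ?_
  rw [(hg.hasDerivAt_Tg hf hz).deriv, enorm_mul, mul_pow, mul_right_comm]

theorem QsLog_zero (s : ℝ) : QsLog s 0 = Qs s := by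
  simp [QsLog, Qs]

theorem QsLog_subset_QsLog (s : ℝ) {α β : ℝ} (hαβ : α ≤ β) : QsLog s β ⊆ QsLog s α := by
  intro f hf
  rw [mem_QsLog_iff] at hf ⊢
  have hlog : 0 < Real.log 2 := Real.log_pos one_lt_two
  have hweight (a : ℂ) (ha : a ∈ ball (0 : ℂ) 1) :
      logWeight a ^ (2 * α) ≤ Real.log 2 ^ (2 * α - 2 * β) * logWeight a ^ (2 * β) := by
    have hpos := logWeight_pos ha
    calc logWeight a ^ (2 * α) = logWeight a ^ (2 * α - 2 * β) * logWeight a ^ (2 * β) := by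
          rw [← Real.rpow_add hpos, sub_add_cancel]
      _ ≤ _ := mul_le_mul_of_nonneg_right (Real.rpow_le_rpow_of_nonpos hlog
          (log_two_le_logWeight ha) (by linarith)) (by positivity)
  refine ⟨hf.1, lt_of_le_of_lt (iSup₂_le fun a ha => ?_) (ENNReal.mul_lt_top
    (ENNReal.ofReal_lt_top (r := Real.log 2 ^ (2 * α - 2 * β))) hf.2)⟩
  calc ENNReal.ofReal (logWeight a ^ (2 * α)) * qsMeasure s f a univ
      ≤ ENNReal.ofReal (Real.log 2 ^ (2 * α - 2 * β) * logWeight a ^ (2 * β)) *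
          qsMeasure s f a univ := mul_le_mul' (ENNReal.ofReal_le_ofReal (hweight a ha)) le_rfl
    _ = ENNReal.ofReal (Real.log 2 ^ (2 * α - 2 * β)) *
          (ENNReal.ofReal (logWeight a ^ (2 * β)) * qsMeasure s f a univ) := by
        rw [ENNReal.ofReal_mul (by positivity), mul_assoc]
    _ ≤ _ := mul_le_mul' le_rfl (le_iSup₂_of_le a ha le_rfl)

theorem add_sq_le_two_mul_add_sq (x y : ℝ≥0∞) : (x + y) ^ 2 ≤ 2 * (x ^ 2 + y ^ 2) := by
  simpa [show (2 : ℝ) - 1 = 1 by norm_num] using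
    ENNReal.rpow_add_le_mul_rpow_add_rpow x y one_le_two

theorem enorm_sq_le_two_mul_add (x y : ℂ) : ‖x‖ₑ ^ 2 ≤ 2 * (‖y‖ₑ ^ 2 + ‖x - y‖ₑ ^ 2) := by
  have htri : ‖x‖ₑ ≤ ‖y‖ₑ + ‖x - y‖ₑ := by simpa using enorm_add_le y (x - y)
  exact (pow_le_pow_left' htri 2).trans (add_sq_le_two_mul_add_sq _ _)

theorem exists_enorm_sq_le_mul_logWeight {f : ℂ → ℂ} (hf : HolOn f)
    (hD : dirichletIntegral f < ⊤) :
    ∃ K : ℝ≥0, ∀ a ∈ ball (0 : ℂ) 1, ‖f a‖ₑ ^ 2 ≤ K * ENNReal.ofReal (logWeight a) := by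
  obtain ⟨C, hC⟩ := exists_enorm_sub_sq_le_logWeight_mul_dirichletIntegral
  have hlog : 0 < ENNReal.ofReal (Real.log 2) := ENNReal.ofReal_pos.2 (Real.log_pos one_lt_two)
  set K := 2 * (‖f 0‖ₑ ^ 2 * (ENNReal.ofReal (Real.log 2))⁻¹ + C * dirichletIntegral f)
  have hK : K ≠ ⊤ := by finiteness
  refine ⟨K.toNNReal, fun a ha => ?_⟩
  rw [ENNReal.coe_toNNReal hK]
  have hone : 1 ≤ (ENNReal.ofReal (Real.log 2))⁻¹ * ENNReal.ofReal (logWeight a) := by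
    rw [← ENNReal.inv_mul_cancel hlog.ne' ENNReal.ofReal_ne_top]
    exact mul_le_mul' le_rfl (ENNReal.ofReal_le_ofReal (log_two_le_logWeight ha))
  calc ‖f a‖ₑ ^ 2 ≤ 2 * (‖f 0‖ₑ ^ 2 + ‖f a - f 0‖ₑ ^ 2) := enorm_sq_le_two_mul_add _ _
    _ ≤ 2 * (‖f 0‖ₑ ^ 2 * ((ENNReal.ofReal (Real.log 2))⁻¹ * ENNReal.ofReal (logWeight a)) +
          C * ENNReal.ofReal (logWeight a) * dirichletIntegral f) :=
        mul_le_mul' le_rfl (add_le_add (le_mul_of_one_le_right' hone) (hC f hf a ha))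
    _ = K * ENNReal.ofReal (logWeight a) := by ring

theorem mapsInto_Tg_of_mem_QsLog_half {p s : ℝ} (hp₁ : 1 ≤ p) (hp₂ : p ≤ 2) (hs₀ : 0 < s)
    (hs₁ : s < 1) {g : ℂ → ℂ} (hg : g ∈ QsLog s (1 / 2)) : MapsInto (Tg g) (Besov p) (Qs s) := by
  intro f hfB
  have hf : HolOn f := hfB.1
  have hD : dirichletIntegral f < ⊤ := by
    rw [← besovIntegral_two]
    exact (Besov_subset_Besov hp₁ hp₂ hfB).2
  have hgQ : g ∈ Qs s := QsLog_zero s ▸ QsLog_subset_QsLog s (by norm_num) hg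
  rw [mem_QsLog_iff] at hg
  rw [mem_Qs_iff] at hgQ ⊢
  set M := ⨆ a ∈ ball (0 : ℂ) 1, qsMeasure s g a univ
  set L := ⨆ a ∈ ball (0 : ℂ) 1,
    ENNReal.ofReal (logWeight a ^ (2 * (1 / 2) : ℝ)) * qsMeasure s g a univ
  obtain ⟨K, hK⟩ := exists_enorm_sq_le_mul_logWeight hf hD
  obtain ⟨C, hC⟩ := exists_lintegral_qsMeasure_enorm_sub_sq_le hs₀ hs₁
  have hfinite : 2 * (K * L + C * (M * dirichletIntegral f)) < ⊤ := by
    have := hg.2.ne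
    have := hgQ.2.ne
    finiteness
  refine ⟨hg.1.Tg hf, lt_of_le_of_lt (iSup₂_le fun a ha => ?_) hfinite⟩
  have hpoint : ‖f a‖ₑ ^ 2 * qsMeasure s g a univ ≤ K * L := by
    calc _ ≤ K * ENNReal.ofReal (logWeight a) * qsMeasure s g a univ :=
          mul_le_mul' (hK a ha) le_rfl
      _ ≤ K * L := by
          rw [mul_assoc]
          exact mul_le_mul' le_rfl (le_iSup₂_of_le a ha (by norm_num))
  have hosc := hC f g hf M (fun u hu => le_iSup₂_of_le u hu le_rfl) a ha
  calc qsMeasure s (Tg g f) a univ = ∫⁻ z, ‖f z‖ₑ ^ 2 ∂qsMeasure s g a :=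
        qsMeasure_Tg_univ s hg.1 hf a
    _ ≤ ∫⁻ z, 2 * (‖f a‖ₑ ^ 2 + ‖f z - f a‖ₑ ^ 2) ∂qsMeasure s g a := lintegral_mono fun z =>
        enorm_sq_le_two_mul_add _ _
    _ = 2 * (‖f a‖ₑ ^ 2 * qsMeasure s g a univ + ∫⁻ z, ‖f z - f a‖ₑ ^ 2 ∂qsMeasure s g a) := by
        rw [lintegral_const_mul' _ _ (by finiteness), lintegral_add_left measurable_const,
          lintegral_const]
    _ ≤ _ := mul_le_mul' le_rfl (add_le_add hpoint hosc)

/-! ### Gliding hump -/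

theorem tsum_four_inv_pow_mul_rpow_le {p : ℝ} (hp : 1 ≤ p) (X : ℕ → ℝ≥0∞) :
    (∑' k, 4⁻¹ ^ k * X k) ^ p ≤ 2 ^ p * ∑' k, 2⁻¹ ^ k * X k ^ p := by
  have hp₀ : 0 < p := by linarith
  set S := ∑' k, 2⁻¹ ^ k * X k ^ p
  have hterm (k : ℕ) : 2⁻¹ ^ k * X k ≤ S ^ p⁻¹ := by
    rw [ENNReal.le_rpow_inv_iff hp₀, ENNReal.mul_rpow_of_nonneg _ _ hp₀.le]
    calc _ ≤ 2⁻¹ ^ k * X k ^ p := mul_le_mul'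
          (ENNReal.rpow_le_self_of_le_one (pow_le_one' (by simp) k) hp) le_rfl
      _ ≤ S := ENNReal.le_tsum k
  have hfour : (4⁻¹ : ℝ≥0∞) = 2⁻¹ * 2⁻¹ := by
    rw [← ENNReal.mul_inv (by simp) (by simp)]
    norm_num
  have hsum : ∑' k, 4⁻¹ ^ k * X k ≤ 2 * S ^ p⁻¹ := by
    calc _ ≤ ∑' k : ℕ, 2⁻¹ ^ k * S ^ p⁻¹ := ENNReal.tsum_le_tsum fun k => by
          rw [hfour, mul_pow, mul_assoc]
          exact mul_le_mul' le_rfl (hterm k)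
      _ = 2 * S ^ p⁻¹ := by rw [ENNReal.tsum_mul_right, ENNReal.tsum_geometric_two]
  calc _ ≤ (2 * S ^ p⁻¹) ^ p := ENNReal.rpow_le_rpow hsum hp₀.le
    _ = 2 ^ p * S := by
      rw [ENNReal.mul_rpow_of_nonneg _ _ hp₀.le, ← ENNReal.rpow_mul, inv_mul_cancel₀ hp₀.ne',
        ENNReal.rpow_one]

theorem ofReal_mul_norm_rpow {c p : ℝ} (hc : 0 ≤ c) (hp : 0 ≤ p) (w : ℂ) :
    ENNReal.ofReal (c * ‖w‖ ^ p) = ENNReal.ofReal c * ‖w‖ₑ ^ p := by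
  rw [ENNReal.ofReal_mul hc, ← ENNReal.ofReal_rpow_of_nonneg (norm_nonneg w) hp, ofReal_norm]

theorem besovIntegral_le_of_hasSum {p : ℝ} (hp : 1 ≤ p) {f : ℂ → ℂ} {F : ℕ → ℂ → ℂ}
    (hf : ∀ z ∈ ball (0 : ℂ) 1, HasSum (fun k => 4⁻¹ ^ k * deriv (F k) z) (deriv f z))
    {B : ℝ≥0∞} (hB : ∀ k, besovIntegral p (F k) ≤ B) : besovIntegral p f ≤ 2 ^ p * (2 * B) := by
  have hp₀ : 0 ≤ p := by linarith
  have hpt (z : ℂ) (hz : z ∈ ball (0 : ℂ) 1) :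
      ENNReal.ofReal ((1 - ‖z‖) ^ (p - 2) * ‖deriv f z‖ ^ p) ≤ 2 ^ p * ∑' k, 2⁻¹ ^ k *
        ENNReal.ofReal ((1 - ‖z‖) ^ (p - 2) * ‖deriv (F k) z‖ ^ p) := by
    have hz' : 0 < 1 - ‖z‖ := sub_pos.2 (mem_ball_zero_iff.1 hz)
    have htri : ‖deriv f z‖ₑ ≤ ∑' k, 4⁻¹ ^ k * ‖deriv (F k) z‖ₑ := by
      rw [← (hf z hz).tsum_eq]
      refine enorm_tsum_le_tsum_enorm.trans_eq (tsum_congr fun k => ?_)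
      have hfour : ‖(4⁻¹ : ℂ)‖ₑ = 4⁻¹ := by
        rw [← ofReal_norm, norm_inv, Complex.norm_ofNat, ENNReal.ofReal_inv_of_pos four_pos,
          ENNReal.ofReal_ofNat]
      rw [enorm_mul, enorm_pow, hfour]
    have hsum : ‖deriv f z‖ₑ ^ p ≤ 2 ^ p * ∑' k, 2⁻¹ ^ k * ‖deriv (F k) z‖ₑ ^ p :=
      (ENNReal.rpow_le_rpow htri hp₀).trans (tsum_four_inv_pow_mul_rpow_le hp _)
    simp only [ofReal_mul_norm_rpow (Real.rpow_nonneg hz'.le _) hp₀]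
    refine (mul_le_mul' le_rfl hsum).trans_eq ?_
    rw [mul_left_comm, ← ENNReal.tsum_mul_left]
    simp only [mul_left_comm]
  have := fun k => measurable_deriv (F k)
  calc besovIntegral p f
      ≤ 2 ^ p * ∑' k, 2⁻¹ ^ k * besovIntegral p (F k) := by
        refine (setLIntegral_mono' measurableSet_ball hpt).trans_eq ?_
        rw [lintegral_const_mul' _ _ (by finiteness), lintegral_tsum fun k => by fun_prop]
        exact congrArg _ (tsum_congr fun k => lintegral_const_mul' _ _ (by finiteness))
    _ ≤ 2 ^ p * ∑' k : ℕ, 2⁻¹ ^ k * B :=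
        mul_le_mul' le_rfl (ENNReal.tsum_le_tsum fun k => mul_le_mul' le_rfl (hB k))
    _ = 2 ^ p * (2 * B) := by rw [ENNReal.tsum_mul_right, ENNReal.tsum_geometric_two]

theorem exists_holOn_hasSum_hasSum_deriv {G : ℕ → ℂ → ℂ} (hG : ∀ k, HolOn (G k))
    (hsum : ∀ r < 1, ∃ u : ℕ → ℝ, Summable u ∧ ∀ k, ∀ z ∈ ball (0 : ℂ) r, ‖G k z‖ ≤ u k) :
    ∃ f, HolOn f ∧ ∀ z ∈ ball (0 : ℂ) 1,
      HasSum (G · z) (f z) ∧ HasSum (fun k => deriv (G k) z) (deriv f z) := by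
  have hmaj (z : ℂ) (hz : z ∈ ball (0 : ℂ) 1) : ∃ r < 1, z ∈ ball (0 : ℂ) r ∧ ∃ u : ℕ → ℝ,
      Summable u ∧ ∀ k, ∀ w ∈ ball (0 : ℂ) r, ‖G k w‖ ≤ u k := by
    obtain ⟨r, hzr, hr⟩ := exists_between (mem_ball_zero_iff.1 hz)
    exact ⟨r, hr, mem_ball_zero_iff.2 hzr, hsum r hr⟩
  refine ⟨fun z => ∑' k, G k z, fun z hz => ?_, fun z hz => ?_⟩ <;>
    obtain ⟨r, hr, hzr, u, hu, hle⟩ := hmaj z hz <;>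
    have hGr (k : ℕ) : DifferentiableOn ℂ (G k) (ball 0 r) :=
      (hG k).mono (ball_subset_ball hr.le)
  · exact ((Complex.differentiableOn_tsum_of_summable_norm hu hGr isOpen_ball hle).differentiableAt
      (isOpen_ball.mem_nhds hzr)).differentiableWithinAt
  · exact ⟨(Summable.of_norm_bounded hu fun k => hle k z hzr).hasSum,
      Complex.hasSum_deriv_of_summable_norm hu hGr isOpen_ball hle hzr⟩

theorem exists_mem_Besov_forall_re_le {p : ℝ} (hp : 1 ≤ p) {F : ℕ → ℂ → ℂ}
    (hF : ∀ k, HolOn (F k)) (hre : ∀ k, ∀ z ∈ ball (0 : ℂ) 1, 0 ≤ (F k z).re)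
    (hbdd : ∀ r < 1, ∃ C : ℝ, ∀ k, ∀ z ∈ ball (0 : ℂ) r, ‖F k z‖ ≤ C)
    {B : ℝ≥0} (hB : ∀ k, besovIntegral p (F k) ≤ B) :
    ∃ f ∈ Besov p, ∀ k, ∀ z ∈ ball (0 : ℂ) 1, 4⁻¹ ^ k * (F k z).re ≤ ‖f z‖ := by
  have hmaj (r : ℝ) (hr : r < 1) : ∃ u : ℕ → ℝ,
      Summable u ∧ ∀ k, ∀ z ∈ ball (0 : ℂ) r, ‖4⁻¹ ^ k * F k z‖ ≤ u k := by
    obtain ⟨C, hC⟩ := hbdd r hr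
    refine ⟨fun k => (1 / 4) ^ k * C,
      (summable_geometric_of_lt_one (by norm_num) (by norm_num)).mul_right C, fun k z hz => ?_⟩
    have := hC k z hz
    simp only [norm_mul, norm_pow, norm_inv, Complex.norm_ofNat, one_div]
    gcongr
  obtain ⟨f, hf, hsum⟩ :=
    exists_holOn_hasSum_hasSum_deriv (fun k => DifferentiableOn.const_mul (hF k) _) hmaj
  have hderiv (z : ℂ) (hz : z ∈ ball (0 : ℂ) 1) :
      HasSum (fun k => 4⁻¹ ^ k * deriv (F k) z) (deriv f z) := by
    simpa only [deriv_const_mul _ ((hF _).differentiableAt hz)] using (hsum z hz).2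
  refine ⟨f, ⟨hf, (besovIntegral_le_of_hasSum hp hderiv hB).trans_lt (by finiteness)⟩,
    fun k z hz => ?_⟩
  have hreal (k : ℕ) : (4⁻¹ ^ k * F k z).re = 4⁻¹ ^ k * (F k z).re := by
    rw [← Complex.re_ofReal_mul]
    push_cast
    rfl
  have hresum := Complex.hasSum_re (hsum z hz).1
  simp only [hreal] at hresum
  calc (4⁻¹ : ℝ) ^ k * (F k z).re ≤ (f z).re :=
        le_hasSum hresum k fun j _ => mul_nonneg (by positivity) (hre j z hz)
    _ ≤ ‖f z‖ := Complex.re_le_norm _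

theorem exists_lintegral_re_sq_le_of_mapsInto_Tg {p s : ℝ} (hp : 1 ≤ p) {g : ℂ → ℂ} (hg : HolOn g)
    (hT : MapsInto (Tg g) (Besov p) (Qs s)) {ι : Type*} {F : ι → ℂ → ℂ}
    (hF : ∀ i, HolOn (F i)) (hre : ∀ i, ∀ z ∈ ball (0 : ℂ) 1, 0 ≤ (F i z).re)
    (hbdd : ∀ r < 1, ∃ C : ℝ, ∀ i, ∀ z ∈ ball (0 : ℂ) r, ‖F i z‖ ≤ C)
    {B : ℝ≥0} (hB : ∀ i, besovIntegral p (F i) ≤ B) :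
    ∃ N : ℝ≥0, ∀ i, ∀ a ∈ ball (0 : ℂ) 1,
      ∫⁻ z, ENNReal.ofReal (F i z).re ^ 2 ∂qsMeasure s g a ≤ N := by
  by_contra! hunbdd
  choose i a ha hlarge using fun k : ℕ => hunbdd (16 ^ k * k)
  obtain ⟨f, hf, hfF⟩ := exists_mem_Besov_forall_re_le hp (fun k => hF (i k)) (fun k => hre (i k))
    (fun r hr => (hbdd r hr).imp fun C hC k => hC (i k)) (fun k => hB (i k))
  have hM := (mem_Qs_iff.1 (hT f hf)).2
  simp only [qsMeasure_Tg_univ s hg hf.1] at hM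
  set M := ⨆ a ∈ ball (0 : ℂ) 1, ∫⁻ z, ‖f z‖ₑ ^ 2 ∂qsMeasure s g a
  obtain ⟨k, hk⟩ := ENNReal.exists_nat_gt hM.ne
  have hle : ∫⁻ z, ENNReal.ofReal (F (i k) z).re ^ 2 ∂qsMeasure s g (a k) ≤ 16 ^ k * M := by
    calc _ ≤ ∫⁻ z, 16 ^ k * ‖f z‖ₑ ^ 2 ∂qsMeasure s g (a k) := by
          simp only [lintegral_qsMeasure]
          refine setLIntegral_mono' measurableSet_ball fun z hz => mul_le_mul' le_rfl ?_
          have hle : ENNReal.ofReal (F (i k) z).re ≤ 4 ^ k * ‖f z‖ₑ := by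
            have := hfF k z hz
            rw [inv_pow, inv_mul_le_iff₀ (by positivity)] at this
            refine (ENNReal.ofReal_le_ofReal this).trans_eq ?_
            rw [ENNReal.ofReal_mul (by positivity), ofReal_norm, ENNReal.ofReal_pow (by norm_num),
              ENNReal.ofReal_ofNat]
          calc _ ≤ (4 ^ k * ‖f z‖ₑ) ^ 2 := pow_le_pow_left' hle 2
            _ = _ := by rw [mul_pow, ← pow_mul, mul_comm k, pow_mul]; norm_num
      _ = 16 ^ k * ∫⁻ z, ‖f z‖ₑ ^ 2 ∂qsMeasure s g (a k) :=
          lintegral_const_mul' _ _ (by finiteness)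
      _ ≤ 16 ^ k * M := mul_le_mul' le_rfl (le_iSup₂_of_le (a k) (ha k) le_rfl)
  have hlt := (hlarge k).trans_le hle
  push_cast at hlt
  exact absurd hlt (not_lt.2 (mul_le_mul' le_rfl hk.le))

/-! ### Logarithmic test functions -/

/-- The branch of `log (4 / (1 - conj a * z))` used to test `T_g`. The constant `4` makes its real
part positive on the disc and at least `logWeight a` at `z = a`. -/
def logKernel (a z : ℂ) : ℂ := Real.log 4 - Complex.log (1 - conj a * z)

/-- The function `(log (2 / (1 - |a|)))^(-1/p) log (4 / (1 - conj a * z))`, normalised so that its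
Besov integrals of exponent `q ≥ p` are bounded in `a`. -/
def besovTest (p : ℝ) (a z : ℂ) : ℂ := (logWeight a ^ (-(1 / p)) : ℝ) * logKernel a z

theorem norm_conj_mul_lt {a z : ℂ} {r : ℝ} (ha : a ∈ ball (0 : ℂ) 1) (hz : z ∈ ball (0 : ℂ) r) :
    ‖conj a * z‖ < r := by
  rw [mem_ball_zero_iff] at ha hz
  rw [norm_mul, Complex.norm_conj]
  exact (mul_le_of_le_one_left (norm_nonneg z) ha.le).trans_lt hz

theorem hasDerivAt_logKernel {a z : ℂ} (ha : a ∈ ball (0 : ℂ) 1) (hz : z ∈ ball (0 : ℂ) 1) :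
    HasDerivAt (logKernel a) (conj a / (1 - conj a * z)) z := by
  have hslit : 1 - conj a * z ∈ slitPlane :=
    Complex.mem_slitPlane_of_norm_lt_one (z := -(conj a * z))
      (by simpa using norm_conj_mul_lt ha hz)
  have hinner : HasDerivAt (fun z => 1 - conj a * z) (-conj a) z := by
    simpa using ((hasDerivAt_id z).const_mul (conj a)).const_sub 1
  have h := (hinner.clog hslit).const_sub (Real.log 4 : ℂ)
  rwa [neg_div, neg_neg] at h

theorem re_logKernel (a z : ℂ) :
    (logKernel a z).re = Real.log 4 - Real.log ‖1 - conj a * z‖ := by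
  rw [logKernel, Complex.sub_re, Complex.ofReal_re, Complex.log_re]

theorem re_logKernel_nonneg {a z : ℂ} (ha : a ∈ ball (0 : ℂ) 1) (hz : z ∈ ball (0 : ℂ) 1) :
    0 ≤ (logKernel a z).re := by
  rw [re_logKernel, sub_nonneg]
  exact Real.log_le_log (norm_pos_iff.2 (one_sub_conj_mul_ne_zero ha hz))
    ((norm_one_sub_conj_mul_le_two ha hz).trans (by norm_num))

theorem logWeight_le_re_logKernel_self {a : ℂ} (ha : a ∈ ball (0 : ℂ) 1) :
    logWeight a ≤ (logKernel a a).re := by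
  have hnorm : ‖1 - conj a * a‖ = 1 - ‖a‖ ^ 2 := by
    rw [← Complex.normSq_eq_conj_mul_self, Complex.normSq_eq_norm_sq, ← Complex.ofReal_one,
      ← Complex.ofReal_sub, Complex.norm_real, Real.norm_of_nonneg (one_sub_norm_sq_pos ha).le]
  have hpos := one_sub_norm_sq_pos ha
  have ha' : 0 < 1 - ‖a‖ := sub_pos.2 (mem_ball_zero_iff.1 ha)
  rw [re_logKernel, hnorm, ← Real.log_div four_ne_zero hpos.ne']
  refine Real.log_le_log (by positivity) ?_
  rw [div_le_div_iff₀ ha' hpos]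
  nlinarith [norm_nonneg a]

theorem norm_logKernel_le {a z : ℂ} {r : ℝ} (hr : r < 1) (ha : a ∈ ball (0 : ℂ) 1)
    (hz : z ∈ ball (0 : ℂ) r) :
    ‖logKernel a z‖ ≤ Real.log 4 + (r ^ 2 * (1 - r)⁻¹ / 2 + r) := by
  have hlt : ‖-(conj a * z)‖ < r := by simpa using norm_conj_mul_lt ha hz
  have : 0 < 1 - r := sub_pos.2 hr
  have hlog : ‖Complex.log (1 - conj a * z)‖ ≤ r ^ 2 * (1 - r)⁻¹ / 2 + r := by
    rw [sub_eq_add_neg]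
    refine (Complex.norm_log_one_add_le (hlt.trans hr)).trans ?_
    have hlt₁ : 0 ≤ 1 - ‖-(conj a * z)‖ := by linarith
    gcongr
  refine (norm_sub_le _ _).trans (add_le_add ?_ hlog)
  rw [Complex.norm_real, Real.norm_of_nonneg (Real.log_nonneg (by norm_num))]

theorem exists_besovIntegral_logKernel_le {p : ℝ} (hp : 1 < p) :
    ∃ C : ℝ≥0, ∀ a ∈ ball (0 : ℂ) 1,
      besovIntegral p (logKernel a) ≤ C * ENNReal.ofReal (logWeight a) := by
  obtain ⟨C, hC⟩ := exists_lintegral_kernel_le_logWeight hp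
  refine ⟨C, fun a ha => (setLIntegral_mono' measurableSet_ball fun z hz => ?_).trans (hC a ha)⟩
  have hz' : 0 < 1 - ‖z‖ := sub_pos.2 (mem_ball_zero_iff.1 hz)
  have ha' : ‖a‖ ^ p ≤ 1 :=
    Real.rpow_le_one (norm_nonneg a) (mem_ball_zero_iff.1 ha).le (by linarith)
  rw [(hasDerivAt_logKernel ha hz).deriv, norm_div, Complex.norm_conj,
    Real.div_rpow (norm_nonneg _) (norm_nonneg _), Real.rpow_neg (norm_nonneg _), ← one_div]
  gcongr

theorem besovIntegral_const_mul (p : ℝ) (c : ℂ) (f : ℂ → ℂ) :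
    besovIntegral p (fun z => c * f z) = ENNReal.ofReal (‖c‖ ^ p) * besovIntegral p f := by
  rw [besovIntegral, besovIntegral, ← lintegral_const_mul' _ _ ENNReal.ofReal_ne_top]
  refine lintegral_congr fun z => ?_
  rw [deriv_const_mul_field, norm_mul, Real.mul_rpow (norm_nonneg _) (norm_nonneg _),
    ← ENNReal.ofReal_mul (by positivity), mul_left_comm]

theorem logWeight_rpow_le {a : ℂ} (ha : a ∈ ball (0 : ℂ) 1) {t : ℝ} (ht : t ≤ 0) :
    logWeight a ^ t ≤ Real.log 2 ^ t :=
  Real.rpow_le_rpow_of_nonpos (Real.log_pos one_lt_two) (log_two_le_logWeight ha) ht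

theorem exists_besovIntegral_besovTest_le {p q : ℝ} (hp : 0 < p) (hq : 1 < q) (hpq : p ≤ q) :
    ∃ C : ℝ≥0, ∀ a ∈ ball (0 : ℂ) 1, besovIntegral q (besovTest p a) ≤ C := by
  obtain ⟨C, hC⟩ := exists_besovIntegral_logKernel_le hq
  refine ⟨C * Real.toNNReal (Real.log 2 ^ (1 - q / p)), fun a ha => ?_⟩
  have hL := logWeight_pos ha
  have hnorm : ‖((logWeight a ^ (-(1 / p)) : ℝ) : ℂ)‖ ^ q = logWeight a ^ (-(q / p)) := by
    rw [Complex.norm_real, Real.norm_of_nonneg (by positivity), ← Real.rpow_mul hL.le]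
    ring_nf
  have hpow : logWeight a ^ (-(q / p)) * logWeight a = logWeight a ^ (1 - q / p) := by
    rw [← Real.rpow_add_one hL.ne', neg_add_eq_sub]
  calc besovIntegral q (besovTest p a)
      = ENNReal.ofReal (logWeight a ^ (-(q / p))) * besovIntegral q (logKernel a) := by
        rw [← hnorm]
        exact besovIntegral_const_mul q _ _
    _ ≤ ENNReal.ofReal (logWeight a ^ (-(q / p))) * (C * ENNReal.ofReal (logWeight a)) :=
        mul_le_mul' le_rfl (hC a ha)
    _ = C * ENNReal.ofReal (logWeight a ^ (1 - q / p)) := by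
        rw [mul_left_comm, ← ENNReal.ofReal_mul (by positivity), hpow]
    _ ≤ C * ENNReal.ofReal (Real.log 2 ^ (1 - q / p)) :=
        mul_le_mul' le_rfl (ENNReal.ofReal_le_ofReal (logWeight_rpow_le ha
          (sub_nonpos.2 ((one_le_div hp).2 hpq))))
    _ = _ := by push_cast; rfl

theorem holOn_besovTest (p : ℝ) {a : ℂ} (ha : a ∈ ball (0 : ℂ) 1) : HolOn (besovTest p a) :=
  DifferentiableOn.const_mul (fun _ hz =>
    (hasDerivAt_logKernel ha hz).differentiableAt.differentiableWithinAt) _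

theorem re_besovTest (p : ℝ) (a z : ℂ) :
    (besovTest p a z).re = logWeight a ^ (-(1 / p)) * (logKernel a z).re :=
  Complex.re_ofReal_mul _ _

theorem re_besovTest_nonneg (p : ℝ) {a z : ℂ} (ha : a ∈ ball (0 : ℂ) 1)
    (hz : z ∈ ball (0 : ℂ) 1) : 0 ≤ (besovTest p a z).re := by
  rw [re_besovTest]
  exact mul_nonneg (Real.rpow_nonneg (logWeight_pos ha).le _) (re_logKernel_nonneg ha hz)

theorem logWeight_rpow_le_re_besovTest_self (p : ℝ) {a : ℂ} (ha : a ∈ ball (0 : ℂ) 1) :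
    logWeight a ^ (1 - 1 / p) ≤ (besovTest p a a).re := by
  have hL := logWeight_pos ha
  rw [re_besovTest, ← neg_add_eq_sub, Real.rpow_add_one hL.ne']
  exact mul_le_mul_of_nonneg_left (logWeight_le_re_logKernel_self ha) (by positivity)

theorem norm_besovTest_le {p : ℝ} (hp : 0 < p) {a z : ℂ} {r : ℝ} (hr : r < 1)
    (ha : a ∈ ball (0 : ℂ) 1) (hz : z ∈ ball (0 : ℂ) r) :
    ‖besovTest p a z‖ ≤
      Real.log 2 ^ (-(1 / p)) * (Real.log 4 + (r ^ 2 * (1 - r)⁻¹ / 2 + r)) := by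
  have hL := logWeight_pos ha
  have := Real.log_pos one_lt_two
  have hp' : -(1 / p) ≤ 0 := neg_nonpos.2 (by positivity)
  rw [besovTest, norm_mul, Complex.norm_real, Real.norm_of_nonneg (by positivity)]
  exact mul_le_mul (logWeight_rpow_le ha hp') (norm_logKernel_le hr ha hz) (norm_nonneg _)
    (by positivity)

theorem measurable_re_besovTest (p : ℝ) (a : ℂ) : Measurable fun z => (besovTest p a z).re := by
  simp only [re_besovTest, re_logKernel]
  fun_prop

theorem ofReal_logWeight_rpow_le_besovTest (p : ℝ) {a : ℂ} (ha : a ∈ ball (0 : ℂ) 1) (z : ℂ) :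
    ENNReal.ofReal (logWeight a ^ (2 * (1 - 1 / p))) ≤
      2 * (ENNReal.ofReal (besovTest p a z).re ^ 2 + ‖besovTest p a z - besovTest p a a‖ₑ ^ 2) := by
  have hL := logWeight_pos ha
  have hosc : (besovTest p a a).re ≤
      (besovTest p a z).re + ‖besovTest p a z - besovTest p a a‖ := by
    have h := (abs_le.1 (Complex.abs_re_le_norm (besovTest p a z - besovTest p a a))).1
    rw [Complex.sub_re] at h
    linarith
  have hle : ENNReal.ofReal (logWeight a ^ (1 - 1 / p)) ≤
      ENNReal.ofReal (besovTest p a z).re + ‖besovTest p a z - besovTest p a a‖ₑ := by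
    rw [← ofReal_norm]
    exact (ENNReal.ofReal_le_ofReal ((logWeight_rpow_le_re_besovTest_self p ha).trans hosc)).trans
      ENNReal.ofReal_add_le
  rw [mul_comm 2, Real.rpow_mul hL.le, Real.rpow_two, ENNReal.ofReal_pow (by positivity)]
  exact (pow_le_pow_left' hle 2).trans (add_sq_le_two_mul_add_sq _ _)

theorem ofReal_logWeight_rpow_mul_qsMeasure_univ_le (p s : ℝ) (g : ℂ → ℂ) {a : ℂ}
    (ha : a ∈ ball (0 : ℂ) 1) :
    ENNReal.ofReal (logWeight a ^ (2 * (1 - 1 / p))) * qsMeasure s g a univ ≤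
      2 * (∫⁻ z, ENNReal.ofReal (besovTest p a z).re ^ 2 ∂qsMeasure s g a +
        ∫⁻ z, ‖besovTest p a z - besovTest p a a‖ₑ ^ 2 ∂qsMeasure s g a) := by
  have := measurable_re_besovTest p a
  rw [← lintegral_const, ← lintegral_add_left (by fun_prop),
    ← lintegral_const_mul' _ _ (by finiteness)]
  exact lintegral_mono (ofReal_logWeight_rpow_le_besovTest p ha)

theorem const_mem_Besov {p : ℝ} (hp : 0 < p) (c : ℂ) : (fun _ => c) ∈ Besov p :=
  ⟨differentiableOn_const c, by simp [Real.zero_rpow hp.ne']⟩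

theorem mem_Qs_of_mapsInto_Tg {p s : ℝ} (hp : 0 < p) {g : ℂ → ℂ} (hg : HolOn g)
    (hT : MapsInto (Tg g) (Besov p) (Qs s)) : g ∈ Qs s := by
  have h := mem_Qs_iff.1 (hT _ (const_mem_Besov hp 1))
  simp only [qsMeasure_Tg_univ s hg (differentiableOn_const 1)] at h
  exact mem_Qs_iff.2 ⟨hg, by simpa using h.2⟩

theorem mem_QsLog_of_mapsInto_Tg {p s : ℝ} (hp₁ : 1 < p) (hp₂ : p ≤ 2) (hs₀ : 0 < s) (hs₁ : s < 1)
    {g : ℂ → ℂ} (hg : HolOn g) (hT : MapsInto (Tg g) (Besov p) (Qs s)) :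
    g ∈ QsLog s (1 - 1 / p) := by
  have hp₀ : 0 < p := by linarith
  have hgQ := (mem_Qs_iff.1 (mem_Qs_of_mapsInto_Tg hp₀ hg hT)).2
  set M := ⨆ a ∈ ball (0 : ℂ) 1, qsMeasure s g a univ
  obtain ⟨B, hB⟩ := exists_besovIntegral_besovTest_le hp₀ hp₁ le_rfl
  obtain ⟨D, hD⟩ := exists_besovIntegral_besovTest_le hp₀ one_lt_two hp₂
  obtain ⟨N, hN⟩ := exists_lintegral_re_sq_le_of_mapsInto_Tg hp₁.le hg hT
    (fun a : ball (0 : ℂ) 1 => holOn_besovTest p a.2)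
    (fun a z hz => re_besovTest_nonneg p a.2 hz)
    (fun r hr => ⟨_, fun a z hz => norm_besovTest_le hp₀ hr a.2 hz⟩) (fun a => hB a a.2)
  obtain ⟨C, hC⟩ := exists_lintegral_qsMeasure_enorm_sub_sq_le hs₀ hs₁
  have hfinite : 2 * (N + C * (M * D)) < ⊤ := by
    have := hgQ.ne
    finiteness
  rw [mem_QsLog_iff]
  refine ⟨hg, lt_of_le_of_lt (iSup₂_le fun a ha => ?_) hfinite⟩
  have hosc : ∫⁻ z, ‖besovTest p a z - besovTest p a a‖ₑ ^ 2 ∂qsMeasure s g a ≤ C * (M * D) := by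
    refine (hC _ g (holOn_besovTest p ha) M (fun u hu => le_iSup₂_of_le u hu le_rfl) a ha).trans ?_
    rw [← besovIntegral_two]
    exact mul_le_mul' le_rfl (mul_le_mul' le_rfl (hD a ha))
  exact (ofReal_logWeight_rpow_mul_qsMeasure_univ_le p s g ha).trans
    (mul_le_mul' le_rfl (add_le_add (hN ⟨a, ha⟩ a ha) hosc))

theorem stmt9_general (p p' s : ℝ) (hp1 : 1 < p) (hp2 : p ≤ 2) (hpp' : 1 / p + 1 / p' = 1)
    (hs0 : 0 < s) (hs1 : s < 1) (g : ℂ → ℂ) (hg : HolOn g) :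
    (MapsInto (Tg g) (Besov p) (Qs s) → g ∈ QsLog s (1 / p')) ∧
    (∀ α : ℝ, 1 / 2 ≤ α → g ∈ QsLog s α → MapsInto (Tg g) (Besov p) (Qs s)) := by
  refine ⟨fun hT => ?_, fun α hα hgα => ?_⟩
  · rw [← sub_eq_of_eq_add' hpp'.symm]
    exact mem_QsLog_of_mapsInto_Tg hp1 hp2 hs0 hs1 hg hT
  · exact mapsInto_Tg_of_mem_QsLog_half hp1.le hp2 hs0 hs1 (QsLog_subset_QsLog s hα hgα)

end

/-- For `1 < p ≤ 2`, `0 < s < 1`, `p'` the conjugate exponent of `p`, and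
`g` holomorphic on the unit disc: (i) if `T_g` maps `Bᵖ` into `Q_s`, then
`g ∈ Q_{s,log,1/p'}`; (ii) if `α > 1/2` and `g ∈ Q_{s,log,α}`, then `T_g` maps `Bᵖ`
into `Q_s`. -/
theorem stmt9 (p p' s : ℝ) (hp1 : 1 < p) (hp2 : p ≤ 2) (hpp' : 1 / p + 1 / p' = 1)
    (hs0 : 0 < s) (hs1 : s < 1) (g : ℂ → ℂ) (hg : HolOn g) :
    (MapsInto (Tg g) (Besov p) (Qs s) → g ∈ QsLog s (1 / p')) ∧
    (∀ α : ℝ, 1 / 2 < α → g ∈ QsLog s α → MapsInto (Tg g) (Besov p) (Qs s)) :=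
  (stmt9_general p p' s hp1 hp2 hpp' hs0 hs1 g hg).imp_right fun h α hα => h α hα.le
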